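/- arXiv:1603.04558 — 2 statements merged into one kernel-verified Lean document; each statement's English description precedes it below -/
import Mathlib

section
/- For $a, b > 0$, Watson's formula holds with the third upper and second lower parameters specialized: $2 B(a,b)\,{}_3F_2\left(a, b, \tfrac{a+b-1}{2}; a+b, \tfrac{a+b+1}{2}; 1\right) = \psi\left(\tfrac{a+1}{2}\right) + \psi\left(\tfrac{b+1}{2}\right) - \psi\left(\tfrac{a}{2}\right) - \psi\left(\tfrac{b}{2}\right)$. -/
open Finset

/-- Pochhammer (rising factorial) symbol `(x)_n`. -/
noncomputable def poch (x : ℝ) (n : ℕ) : ℝ := ∏ k ∈ Finset.range n, (x + k)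

/-- Generalized hypergeometric series ₃F₂. -/
noncomputable def F32 (a₁ a₂ a₃ b₁ b₂ z : ℝ) : ℝ :=
  ∑' n : ℕ, (poch a₁ n * poch a₂ n * poch a₃ n) /
    (poch b₁ n * poch b₂ n * n.factorial) * z ^ n

/-- Beta function. -/
noncomputable def Beta (a b : ℝ) : ℝ := Real.Gamma a * Real.Gamma b / Real.Gamma (a + b)

/-- Digamma function `ψ = Γ'/Γ`. -/
noncomputable def digamma (x : ℝ) : ℝ := deriv Real.Gamma x / Real.Gamma x

/-!
Put `W(a, b) = B(a, b) ₃F₂(a, b, (a+b-1)/2; a+b, (a+b+1)/2; 1)` and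
`β(x) = (ψ((x+1)/2) - ψ(x/2)) / 2`. The recurrence `ψ(x+1) = ψ(x) + 1/x` gives
`β(x) + β(x+1) = 1/x`, while a contiguous relation, in which one of the three series is summed by
Gauss's theorem, gives `W(a, b) + W(a+1, b+1) = 1/a + 1/b`. Hence `W(a, b) - β(a) - β(b)` changes
sign under `(a, b) ↦ (a+1, b+1)`. All three terms tend to `0` along this shift, so the difference
vanishes.
-/

open Filter Topology

theorem eq_of_add_succ_eq_add_succ {E : Type*} [NormedAddCommGroup E] {u v : ℕ → E}
    (h : ∀ n, u n + u (n + 1) = v n + v (n + 1)) (huv : Tendsto (fun n => u n - v n) atTop (𝓝 0)) :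
    u 0 = v 0 := by
  have norm_eq (n : ℕ) : ‖u n - v n‖ = ‖u 0 - v 0‖ := by
    induction n with
    | zero => rfl
    | succ n ih =>
      have : u (n + 1) - v (n + 1) = -(u n - v n) := by
        rw [neg_sub, sub_eq_sub_iff_add_eq_add, add_comm, h, add_comm]
      rw [this, norm_neg, ih]
  have hconst : Tendsto (fun _ : ℕ => ‖u 0 - v 0‖) atTop (𝓝 0) := by
    simpa only [norm_eq, norm_zero] using huv.norm
  exact sub_eq_zero.1 (norm_eq_zero.1 (tendsto_nhds_unique tendsto_const_nhds hconst))

theorem add_natCast_ne_neg_natCast {x : ℝ} (hx : ∀ n : ℕ, x ≠ -n) (m n : ℕ) : x + m ≠ -n := by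
  intro h
  exact hx (m + n) (by push_cast; linarith)

theorem add_one_ne_neg_natCast {x : ℝ} (hx : ∀ n : ℕ, x ≠ -n) (n : ℕ) : x + 1 ≠ -n := by
  simpa only [Nat.cast_one] using add_natCast_ne_neg_natCast hx 1 n

theorem add_natCast_ne_zero {x : ℝ} (hx : ∀ n : ℕ, x ≠ -n) (n : ℕ) : x + n ≠ 0 :=
  fun h => hx n (eq_neg_of_add_eq_zero_left h)

theorem ne_neg_natCast_of_pos {x : ℝ} (hx : 0 < x) (n : ℕ) : x ≠ -n :=
  ((neg_nonpos.2 n.cast_nonneg).trans_lt hx).ne'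

theorem eventually_pos_add_natCast (x : ℝ) : ∀ᶠ n : ℕ in atTop, 0 < x + n :=
  (tendsto_atTop_add_const_left _ x tendsto_natCast_atTop_atTop).eventually_gt_atTop 0

theorem tendsto_one_div_add_natCast (x : ℝ) :
    Tendsto (fun n : ℕ => 1 / (x + n)) atTop (𝓝 0) :=
  (tendsto_atTop_add_const_left _ x tendsto_natCast_atTop_atTop).const_div_atTop 1

section Pochhammer

theorem poch_zero (x : ℝ) : poch x 0 = 1 :=
  prod_range_zero _

theorem poch_succ (x : ℝ) (n : ℕ) : poch x (n + 1) = poch x n * (x + n) :=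
  prod_range_succ _ n

theorem poch_ne_zero {x : ℝ} (hx : ∀ n : ℕ, x ≠ -n) (n : ℕ) : poch x n ≠ 0 :=
  prod_ne_zero_iff.2 fun k _ => add_natCast_ne_zero hx k

theorem poch_mul_add_natCast (x : ℝ) (n : ℕ) : poch x n * (x + n) = x * poch (x + 1) n := by
  rw [← poch_succ, poch, prod_range_succ', mul_comm, Nat.cast_zero, add_zero, poch]
  congr 1
  exact prod_congr rfl fun k _ => by push_cast; ring

theorem poch_div_poch_add_one {c : ℝ} (hc : ∀ n : ℕ, c + 1 ≠ -n) {n : ℕ} (hn : c + n ≠ 0) :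
    poch c n / poch (c + 1) n = c / (c + n) := by
  rw [div_eq_div_iff (poch_ne_zero hc n) hn, poch_mul_add_natCast]

theorem tendsto_natCast_mul_poch_div_poch_add_one {c : ℝ} (hc : ∀ n : ℕ, c + 1 ≠ -n) :
    Tendsto (fun n : ℕ => n * (poch c n / poch (c + 1) n)) atTop (𝓝 c) := by
  have h : Tendsto (fun n : ℕ => c * (n / (n + c))) atTop (𝓝 (c * 1)) :=
    (tendsto_natCast_div_add_atTop c).const_mul c
  rw [mul_one] at h
  refine h.congr' ?_
  filter_upwards [eventually_pos_add_natCast c] with n hn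
  rw [poch_div_poch_add_one hc hn.ne']
  ring

theorem Gamma_add_natCast {x : ℝ} (hx : ∀ n : ℕ, x ≠ -n) (n : ℕ) :
    Real.Gamma (x + n) = poch x n * Real.Gamma x := by
  induction n with
  | zero => rw [Nat.cast_zero, add_zero, poch_zero, one_mul]
  | succ n ih =>
    rw [Nat.cast_succ, ← add_assoc, Real.Gamma_add_one (add_natCast_ne_zero hx n), ih, poch_succ]
    ring

theorem tendsto_Gamma_add_natCast_div {x : ℝ} (hx : ∀ n : ℕ, x ≠ -n) :
    Tendsto (fun n : ℕ => Real.Gamma (x + (n + 1 : ℕ)) / ((n : ℝ) ^ x * n.factorial))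
      atTop (𝓝 1) := by
  have hΓ := Real.Gamma_ne_zero hx
  have h : Tendsto (fun n => Real.Gamma x / Real.GammaSeq x n) atTop
      (𝓝 (Real.Gamma x / Real.Gamma x)) :=
    tendsto_const_nhds.div (Real.GammaSeq_tendsto_Gamma x) hΓ
  rw [div_self hΓ] at h
  refine h.congr fun n => ?_
  have hseq : Real.GammaSeq x n = (n : ℝ) ^ x * n.factorial / poch x (n + 1) := rfl
  rw [hseq, Gamma_add_natCast hx, div_div_eq_mul_div, mul_comm]

end Pochhammer

section ZeroBalanced

/-- The coefficient `B(a, b) (a)ₙ (b)ₙ / ((a + b)ₙ n!)` of the zero-balanced hypergeometric series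
`B(a, b) ₂F₁(a, b; a + b; z)`, encoded as a quotient of Gamma values so that shifting `a` and `b`
by one is nearly the same as shifting `n` by one. -/
noncomputable def zeroBalancedCoeff (a b : ℝ) (n : ℕ) : ℝ :=
  Real.Gamma (a + n) * Real.Gamma (b + n) / (Real.Gamma (a + b + n) * n.factorial)

variable {a b : ℝ}

theorem Beta_mul_poch_div (ha : ∀ n : ℕ, a ≠ -n) (hb : ∀ n : ℕ, b ≠ -n)
    (hab : ∀ n : ℕ, a + b ≠ -n) (n : ℕ) :
    Beta a b * (poch a n * poch b n / (poch (a + b) n * n.factorial)) =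
      zeroBalancedCoeff a b n := by
  rw [zeroBalancedCoeff, Beta, Gamma_add_natCast ha, Gamma_add_natCast hb, Gamma_add_natCast hab,
    div_mul_div_comm]
  congr 1 <;> ring

theorem zeroBalancedCoeff_pos (ha : 0 < a) (hb : 0 < b) (n : ℕ) : 0 < zeroBalancedCoeff a b n := by
  have Gamma_pos {x : ℝ} (hx : 0 < x) : 0 < Real.Gamma (x + n) :=
    Real.Gamma_pos_of_pos (by positivity)
  have := Gamma_pos ha
  have := Gamma_pos hb
  have := Gamma_pos (add_pos ha hb)
  unfold zeroBalancedCoeff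
  positivity

theorem zeroBalancedCoeff_succ (ha : ∀ n : ℕ, a ≠ -n) (hb : ∀ n : ℕ, b ≠ -n)
    (hab : ∀ n : ℕ, a + b ≠ -n) (n : ℕ) :
    (n + 1) * zeroBalancedCoeff a b (n + 1) =
      (a + n) * (b + n) / (a + b + n) * zeroBalancedCoeff a b n := by
  have hs := add_natCast_ne_zero hab n
  have hΓ := Real.Gamma_ne_zero (add_natCast_ne_neg_natCast hab n)
  simp only [zeroBalancedCoeff, Nat.cast_succ, ← add_assoc, Nat.factorial_succ, Nat.cast_mul]
  rw [Real.Gamma_add_one (add_natCast_ne_zero ha n), Real.Gamma_add_one (add_natCast_ne_zero hb n),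
    Real.Gamma_add_one hs]
  field_simp

theorem zeroBalancedCoeff_add_one (hab : ∀ n : ℕ, a + b ≠ -n) (n : ℕ) :
    (a + b + (n + 1 : ℕ)) * zeroBalancedCoeff (a + 1) (b + 1) n =
      (n + 1) * zeroBalancedCoeff a b (n + 1) := by
  have hs := add_natCast_ne_zero hab (n + 1)
  have hΓ := Real.Gamma_ne_zero (add_natCast_ne_neg_natCast hab (n + 1))
  have Gamma_succ : Real.Gamma (a + 1 + (b + 1) + n) =
      (a + b + (n + 1 : ℕ)) * Real.Gamma (a + b + (n + 1 : ℕ)) := by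
    rw [← Real.Gamma_add_one hs]
    push_cast
    ring_nf
  have shift (x : ℝ) : x + 1 + n = x + (n + 1 : ℕ) := by push_cast; ring
  rw [zeroBalancedCoeff, zeroBalancedCoeff, Gamma_succ, shift, shift, Nat.factorial_succ]
  push_cast at hs hΓ ⊢
  field_simp

theorem tendsto_natCast_mul_zeroBalancedCoeff (ha : ∀ n : ℕ, a ≠ -n) (hb : ∀ n : ℕ, b ≠ -n)
    (hab : ∀ n : ℕ, a + b ≠ -n) :
    Tendsto (fun n : ℕ => n * zeroBalancedCoeff a b n) atTop (𝓝 1) := by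
  rw [← tendsto_add_atTop_iff_nat 1]
  have h := ((tendsto_Gamma_add_natCast_div ha).mul (tendsto_Gamma_add_natCast_div hb)).div
    (tendsto_Gamma_add_natCast_div hab) one_ne_zero
  rw [mul_one, div_one] at h
  refine h.congr' ?_
  filter_upwards [eventually_gt_atTop 0] with n hn
  have hn' : (0 : ℝ) < n := Nat.cast_pos.2 hn
  have hΓ := Real.Gamma_ne_zero (add_natCast_ne_neg_natCast hab (n + 1))
  simp only [zeroBalancedCoeff, Pi.div_apply, Real.rpow_add hn', Nat.factorial_succ, Nat.cast_mul]
  field_simp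

theorem summable_zeroBalancedCoeff_mul {c : ℝ} (ha : ∀ n : ℕ, a ≠ -n) (hb : ∀ n : ℕ, b ≠ -n)
    (hab : ∀ n : ℕ, a + b ≠ -n) (hc : ∀ n : ℕ, c + 1 ≠ -n) :
    Summable fun n => zeroBalancedCoeff a b n * (poch c n / poch (c + 1) n) := by
  have h := (tendsto_natCast_mul_zeroBalancedCoeff ha hb hab).mul
    (tendsto_natCast_mul_poch_div_poch_add_one hc)
  refine summable_of_isBigO_nat (Real.summable_one_div_nat_pow.2 one_lt_two)
    (Asymptotics.isBigO_of_div_tendsto_nhds ?_ _ (h.congr fun n => ?_))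
  · filter_upwards [eventually_ne_atTop 0] with n hn h0
    exact absurd h0 (by positivity)
  · simp only [Pi.div_apply, div_div_eq_mul_div, div_one]
    ring

end ZeroBalanced

section WatsonSum

/-- The normalised series `B(a, b) ₃F₂(a, b, c; a + b, c + 1; 1)`. Watson's case is
`c = (a + b - 1) / 2`, and Gauss's theorem sums the case `c = a + b`. -/
noncomputable def watsonSum (a b c : ℝ) : ℝ :=
  Beta a b * F32 a b c (a + b) (c + 1) 1

variable {a b c : ℝ}

theorem hasSum_watsonSum (ha : ∀ n : ℕ, a ≠ -n) (hb : ∀ n : ℕ, b ≠ -n)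
    (hab : ∀ n : ℕ, a + b ≠ -n) (hc : ∀ n : ℕ, c + 1 ≠ -n) :
    HasSum (fun n => zeroBalancedCoeff a b n * (poch c n / poch (c + 1) n)) (watsonSum a b c) := by
  convert (summable_zeroBalancedCoeff_mul ha hb hab hc).hasSum using 1
  rw [watsonSum, F32, ← tsum_mul_left]
  refine tsum_congr fun n => ?_
  rw [← Beta_mul_poch_div ha hb hab, one_pow, mul_one, mul_assoc (Beta a b),
    div_mul_div_comm, mul_right_comm (poch (a + b) n)]

theorem sum_range_zeroBalancedCoeff_mul (ha : ∀ n : ℕ, a ≠ -n) (hb : ∀ n : ℕ, b ≠ -n)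
    (hab : ∀ n : ℕ, a + b ≠ -n) (n : ℕ) :
    ∑ k ∈ range n, zeroBalancedCoeff a b k * ((a + b) / (a + b + k)) =
      (1 / a + 1 / b) * (n * zeroBalancedCoeff a b n) := by
  induction n with
  | zero => simp
  | succ n ih =>
    have ha₀ : a ≠ 0 := by simpa using ha 0
    have hb₀ : b ≠ 0 := by simpa using hb 0
    have hs := add_natCast_ne_zero hab n
    rw [sum_range_succ, ih, Nat.cast_succ, zeroBalancedCoeff_succ ha hb hab]
    field_simp
    ring

theorem watsonSum_add_eq (ha : ∀ n : ℕ, a ≠ -n) (hb : ∀ n : ℕ, b ≠ -n)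
    (hab : ∀ n : ℕ, a + b ≠ -n) : watsonSum a b (a + b) = 1 / a + 1 / b := by
  have hab₁ := add_one_ne_neg_natCast hab
  refine tendsto_nhds_unique (hasSum_watsonSum ha hb hab hab₁).tendsto_sum_nat ?_
  simp only [poch_div_poch_add_one hab₁ (add_natCast_ne_zero hab _),
    sum_range_zeroBalancedCoeff_mul ha hb hab]
  simpa only [mul_one] using
    (tendsto_natCast_mul_zeroBalancedCoeff ha hb hab).const_mul (1 / a + 1 / b)

theorem zeroBalancedCoeff_mul_sub_succ (hab : ∀ n : ℕ, a + b ≠ -n)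
    (hc : ∀ n : ℕ, c + 1 ≠ -n) (n : ℕ) :
    (c + 1) * (zeroBalancedCoeff a b (n + 1) *
        (poch (a + b) (n + 1) / poch (a + b + 1) (n + 1)) -
      zeroBalancedCoeff a b (n + 1) * (poch c (n + 1) / poch (c + 1) (n + 1))) =
    (a + b - c) * (zeroBalancedCoeff (a + 1) (b + 1) n *
      (poch (c + 1) n / poch (c + 1 + 1) n)) := by
  have hab₁ := add_one_ne_neg_natCast hab
  have hc₁ := add_one_ne_neg_natCast hc
  have hs := add_natCast_ne_zero hab (n + 1)
  have hcn := add_natCast_ne_zero hc n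
  have hcn₁ : c + (n + 1 : ℕ) ≠ 0 := by
    rwa [Nat.cast_succ, add_comm (n : ℝ), ← add_assoc]
  have hshift := eq_div_of_mul_eq hs (mul_comm _ _ |>.trans (zeroBalancedCoeff_add_one hab n))
  rw [poch_div_poch_add_one hab₁ hs, poch_div_poch_add_one hc hcn₁, poch_div_poch_add_one hc₁ hcn,
    hshift]
  push_cast at hs hcn₁ ⊢
  field_simp
  ring

theorem watsonSum_contiguous (ha : ∀ n : ℕ, a ≠ -n) (hb : ∀ n : ℕ, b ≠ -n)
    (hab : ∀ n : ℕ, a + b ≠ -n) (hc : ∀ n : ℕ, c + 1 ≠ -n) :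
    (a + b - c) * watsonSum (a + 1) (b + 1) (c + 1) + (c + 1) * watsonSum a b c =
      (c + 1) * (1 / a + 1 / b) := by
  have ha₁ := add_one_ne_neg_natCast ha
  have hb₁ := add_one_ne_neg_natCast hb
  have hab₁ := add_one_ne_neg_natCast hab
  have hab₂ (n : ℕ) : a + 1 + (b + 1) ≠ -n := by
    rw [add_add_add_comm, ← add_assoc]
    exact add_one_ne_neg_natCast hab₁ n
  have hdiff := ((hasSum_watsonSum ha hb hab hab₁).sub
    (hasSum_watsonSum ha hb hab hc)).mul_left (c + 1)
  have htail := (hasSum_nat_add_iff' 1).2 hdiff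
  simp only [zeroBalancedCoeff_mul_sub_succ hab hc, range_one, sum_singleton, poch_zero, sub_self,
    mul_zero, sub_zero, watsonSum_add_eq ha hb hab] at htail
  have hshift := (hasSum_watsonSum ha₁ hb₁ hab₂ (add_one_ne_neg_natCast hc)).mul_left (a + b - c)
  linear_combination hshift.unique htail

theorem watsonSum_mem_Icc (ha : 0 < a) (hb : 0 < b) (hc : 0 < c) (hcab : c ≤ a + b) :
    watsonSum a b c ∈ Set.Icc 0 (1 / a + 1 / b) := by
  have ha' := ne_neg_natCast_of_pos ha
  have hb' := ne_neg_natCast_of_pos hb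
  have hab : 0 < a + b := add_pos ha hb
  have hab' := ne_neg_natCast_of_pos hab
  have ratio_eq {x : ℝ} (hx : 0 < x) (n : ℕ) : poch x n / poch (x + 1) n = x / (x + n) :=
    poch_div_poch_add_one (ne_neg_natCast_of_pos (by positivity)) (by positivity)
  have hasSum {x : ℝ} (hx : 0 < x) :
      HasSum (fun n : ℕ => zeroBalancedCoeff a b n * (x / (x + n))) (watsonSum a b x) := by
    simpa only [ratio_eq hx] using
      hasSum_watsonSum ha' hb' hab' (ne_neg_natCast_of_pos (add_pos hx one_pos))
  have coeff_nonneg (n : ℕ) := (zeroBalancedCoeff_pos ha hb n).le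
  constructor
  · exact (hasSum hc).nonneg fun n => mul_nonneg (coeff_nonneg n) (by positivity)
  · rw [← watsonSum_add_eq ha' hb' hab']
    refine hasSum_le (fun n => mul_le_mul_of_nonneg_left ?_ (coeff_nonneg n)) (hasSum hc)
      (hasSum hab)
    rw [div_le_div_iff₀ (by positivity) (by positivity)]
    nlinarith [n.cast_nonneg (α := ℝ)]

theorem tendsto_watsonSum_add_natCast (a b c : ℝ) :
    Tendsto (fun n : ℕ => watsonSum (a + n) (b + n) (c + n)) atTop (𝓝 0) := by
  have hlim := (tendsto_one_div_add_natCast a).add (tendsto_one_div_add_natCast b)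
  rw [add_zero] at hlim
  have hmem : ∀ᶠ n : ℕ in atTop, watsonSum (a + n) (b + n) (c + n) ∈
      Set.Icc 0 (1 / (a + n) + 1 / (b + n)) := by
    filter_upwards [eventually_pos_add_natCast a, eventually_pos_add_natCast b,
      eventually_pos_add_natCast c, eventually_pos_add_natCast (a + b - c)] with n ha hb hc hcab
    exact watsonSum_mem_Icc ha hb hc (by linarith)
  exact squeeze_zero' (hmem.mono fun _ h => h.1) (hmem.mono fun _ h => h.2) hlim

end WatsonSum

section Digamma

theorem digamma_add_one {x : ℝ} (hx : ∀ n : ℕ, x ≠ -n) : digamma (x + 1) = digamma x + 1 / x := by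
  have hx₀ : x ≠ 0 := by simpa using hx 0
  have hfun : (fun y => Real.Gamma (y + 1)) =ᶠ[𝓝 x] fun y => y * Real.Gamma y :=
    (eventually_ne_nhds hx₀).mono fun y => Real.Gamma_add_one
  calc digamma (x + 1) = logDeriv (fun y => Real.Gamma (y + 1)) x := by
        rw [logDeriv_apply, deriv_comp_add_const, digamma]
    _ = logDeriv (fun y => y * Real.Gamma y) x := by
        rw [logDeriv_apply, logDeriv_apply, hfun.deriv_eq, hfun.eq_of_nhds]
    _ = logDeriv (fun y => y) x + logDeriv Real.Gamma x :=
        logDeriv_mul x hx₀ (Real.Gamma_ne_zero hx) differentiableAt_fun_id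
          (Real.differentiableAt_Gamma hx)
    _ = digamma x + 1 / x := by
        rw [logDeriv_id', add_comm]
        rfl

theorem monotoneOn_digamma : MonotoneOn digamma (Set.Ioi 0) := by
  have hderiv (x : ℝ) (hx : 0 < x) : HasDerivAt (Real.log ∘ Real.Gamma) (digamma x) x :=
    (Real.differentiableAt_Gamma (ne_neg_natCast_of_pos hx)).hasDerivAt.log
      (Real.Gamma_pos_of_pos hx).ne'
  exact (Real.convexOn_log_Gamma.monotoneOn_deriv fun x hx =>
    (hderiv x hx).differentiableAt).congr fun x hx => (hderiv x hx).deriv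

/-- Nielsen's beta function `β`: the digamma side of Watson's formula is `2 (β(a) + β(b))`. -/
noncomputable def nielsenBeta (x : ℝ) : ℝ :=
  (digamma ((x + 1) / 2) - digamma (x / 2)) / 2

theorem nielsenBeta_add_nielsenBeta_add_one {x : ℝ} (hx : ∀ n : ℕ, x ≠ -n) :
    nielsenBeta x + nielsenBeta (x + 1) = 1 / x := by
  have hx₂ (n : ℕ) : x / 2 ≠ -n := fun h => hx (2 * n) (by push_cast; linarith)
  have hψ := digamma_add_one hx₂
  rw [one_div_div] at hψ
  rw [nielsenBeta, nielsenBeta, show (x + 1 + 1) / 2 = x / 2 + 1 by ring, hψ]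
  ring

theorem nielsenBeta_nonneg {x : ℝ} (hx : 0 < x) : 0 ≤ nielsenBeta x := by
  have hψ : digamma (x / 2) ≤ digamma ((x + 1) / 2) :=
    monotoneOn_digamma (half_pos hx) (half_pos (add_pos hx one_pos)) (by linarith)
  exact div_nonneg (sub_nonneg.2 hψ) zero_le_two

theorem nielsenBeta_le_one_div {x : ℝ} (hx : 0 < x) : nielsenBeta x ≤ 1 / x := by
  have hrec := nielsenBeta_add_nielsenBeta_add_one (ne_neg_natCast_of_pos hx)
  have hnonneg := nielsenBeta_nonneg (add_pos hx one_pos)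
  linarith

theorem tendsto_nielsenBeta_add_natCast (x : ℝ) :
    Tendsto (fun n : ℕ => nielsenBeta (x + n)) atTop (𝓝 0) :=
  squeeze_zero' ((eventually_pos_add_natCast x).mono fun _ => nielsenBeta_nonneg)
    ((eventually_pos_add_natCast x).mono fun _ => nielsenBeta_le_one_div)
    (tendsto_one_div_add_natCast x)

end Digamma

section Watson

variable {a b : ℝ}

theorem watsonSum_half_add_watsonSum_half_add_one (ha : ∀ n : ℕ, a ≠ -n) (hb : ∀ n : ℕ, b ≠ -n)
    (hab : ∀ n : ℕ, a + b ≠ -n) :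
    watsonSum a b ((a + b - 1) / 2) + watsonSum (a + 1) (b + 1) ((a + b - 1) / 2 + 1) =
      1 / a + 1 / b := by
  have hc (n : ℕ) : (a + b - 1) / 2 + 1 ≠ -n := fun h =>
    hab (2 * n + 1) (by push_cast; linarith)
  have hc₀ : (a + b - 1) / 2 + 1 ≠ 0 := by simpa using hc 0
  refine mul_left_cancel₀ hc₀ ?_
  linear_combination watsonSum_contiguous ha hb hab hc

theorem watsonSum_half_eq (ha : ∀ n : ℕ, a ≠ -n) (hb : ∀ n : ℕ, b ≠ -n)
    (hab : ∀ n : ℕ, a + b ≠ -n) :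
    watsonSum a b ((a + b - 1) / 2) = nielsenBeta a + nielsenBeta b := by
  let u (n : ℕ) := watsonSum (a + n) (b + n) ((a + b - 1) / 2 + n)
  let v (n : ℕ) := nielsenBeta (a + n) + nielsenBeta (b + n)
  have hlim : Tendsto (fun n => u n - v n) atTop (𝓝 0) := by
    simpa only [add_zero, sub_zero] using (tendsto_watsonSum_add_natCast a b _).sub
      ((tendsto_nielsenBeta_add_natCast a).add (tendsto_nielsenBeta_add_natCast b))
  have hrec (n : ℕ) : u n + u (n + 1) = v n + v (n + 1) := by
    have han := add_natCast_ne_neg_natCast ha n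
    have hbn := add_natCast_ne_neg_natCast hb n
    have habn (m : ℕ) : a + n + (b + n) ≠ -m := by
      have := add_natCast_ne_neg_natCast hab (2 * n) m
      push_cast at this
      rwa [add_add_add_comm, ← two_mul]
    have hu := watsonSum_half_add_watsonSum_half_add_one han hbn habn
    have hv := congr_arg₂ (· + ·) (nielsenBeta_add_nielsenBeta_add_one han)
      (nielsenBeta_add_nielsenBeta_add_one hbn)
    rw [show (a + n + (b + n) - 1) / 2 = (a + b - 1) / 2 + n by ring] at hu
    simp only [u, v, Nat.cast_succ, ← add_assoc] at hu hv ⊢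
    linear_combination hu - hv
  simpa [u, v] using eq_of_add_succ_eq_add_succ hrec hlim

end Watson

theorem stmt10_general (a b : ℝ) (ha : ∀ n : ℕ, a ≠ -n) (hb : ∀ n : ℕ, b ≠ -n)
    (hab : ∀ n : ℕ, a + b ≠ -n) :
    2 * Beta a b * F32 a b ((a + b - 1) / 2) (a + b) ((a + b + 1) / 2) 1
      = digamma ((a + 1) / 2) + digamma ((b + 1) / 2)
          - digamma (a / 2) - digamma (b / 2) := by
  have h := watsonSum_half_eq ha hb hab
  rw [watsonSum, show (a + b - 1) / 2 + 1 = (a + b + 1) / 2 by ring, nielsenBeta, nielsenBeta] at h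
  linear_combination 2 * h

theorem stmt10 (a b : ℝ) (ha : 0 < a) (hb : 0 < b) :
    2 * Beta a b * F32 a b ((a + b - 1) / 2) (a + b) ((a + b + 1) / 2) 1
      = digamma ((a + 1) / 2) + digamma ((b + 1) / 2)
          - digamma (a / 2) - digamma (b / 2) :=
  stmt10_general a b (ne_neg_natCast_of_pos ha) (ne_neg_natCast_of_pos hb)
    (ne_neg_natCast_of_pos (add_pos ha hb))
end

section
/- For $N \geq 1$ and rationals $r_1, r_2, r_3, r_4 \in \frac{1}{N}\mathbb{Z}$ with $r_1+r_2+r_3+r_4 \in \mathbb{Z}$ and no $r_i \in \mathbb{Z}$: if $\{s r_1\}+\{s r_2\}+\{s r_3\}+\{s r_4\} = 2$ for all $s$ coprime to $N$, then the Gamma quotient $\Gamma(\{r_1\})\Gamma(\{r_2\})\Gamma(\{r_3\})\Gamma(\{r_4\})/\pi^2$ is an algebraic number. -/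
/-!
Up to logarithms of algebraic numbers, `log (Γ(x) / √π)` is odd under `x ↦ 1 - x` by the reflection
formula and satisfies `∑ k < d, f ((y + k) / d) = f y` by the Gauss multiplication formula, so it is
an odd distribution on `ℤ/Nℤ` in the sense of Kubert. Every odd distribution with values in a
`ℚ`-vector space satisfies all the linear relations that the dilates of the first Bernoulli
distribution `B₁` satisfy, and the hypothesis on fractional parts is such a relation.

To see this, take complex values and decompose under `(ℤ/Nℤ)ˣ`. A distribution in the
`χ`-eigenspace is determined by its value at `N / cond χ`, so this eigenspace is at most a line; for
odd `χ` it is spanned by the component of `B₁`, which is nonzero because `B₁` pairs with the inverse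
Fourier transform of `χ` to `L(1, χ) / (π i) ≠ 0`.
-/

open Finset

namespace KoblitzOgus

/-! ### The Gauss multiplication formula -/

section GaussMultiplication

theorem eq_mul_Gamma_of_log_convex {f : ℝ → ℝ}
    (hf_conv : ConvexOn ℝ (Set.Ioi 0) (Real.log ∘ f))
    (hf_feq : ∀ {y : ℝ}, 0 < y → f (y + 1) = y * f y)
    (hf_pos : ∀ {y : ℝ}, 0 < y → 0 < f y) {x : ℝ} (hx : 0 < x) :
    f x = f 1 * Real.Gamma x := by
  have h1 : 0 < f 1 := hf_pos one_pos
  have hconv : ConvexOn ℝ (Set.Ioi 0) (Real.log ∘ fun y ↦ f y / f 1) := by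
    refine (hf_conv.add_const (-Real.log (f 1))).congr fun y hy ↦ ?_
    simp [Real.log_div (hf_pos hy).ne' h1.ne', sub_eq_add_neg]
  have hΓ := Real.eq_Gamma_of_log_convex hconv
    (fun hy ↦ by rw [hf_feq hy, mul_div_assoc]) (fun hy ↦ div_pos (hf_pos hy) h1)
    (div_self h1.ne') (Set.mem_Ioi.mpr hx)
  rw [← hΓ, mul_div_cancel₀ _ h1.ne']

/-- The left-hand side of Gauss's multiplication formula, which `gaussProduct_eq_mul_Gamma`
identifies with a constant multiple of `Γ`. -/
noncomputable def gaussProduct (m : ℕ) (x : ℝ) : ℝ :=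
  (m : ℝ) ^ x * ∏ k ∈ range m, Real.Gamma ((x + k) / m)

variable {m : ℕ} [NeZero m] {x : ℝ}

theorem Gamma_add_div_pos (hx : 0 < x) (k : ℕ) : 0 < Real.Gamma ((x + k) / m) :=
  Real.Gamma_pos_of_pos (div_pos (by positivity) (Nat.cast_pos.mpr (NeZero.pos m)))

theorem gaussProduct_pos (hx : 0 < x) : 0 < gaussProduct m x :=
  mul_pos (Real.rpow_pos_of_pos (Nat.cast_pos.mpr (NeZero.pos m)) x)
    (prod_pos fun k _ ↦ Gamma_add_div_pos hx k)

theorem log_gaussProduct (hx : 0 < x) :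
    Real.log (gaussProduct m x) =
      x * Real.log m + ∑ k ∈ range m, Real.log (Real.Gamma ((x + k) / m)) := by
  have hm : (0 : ℝ) < m := Nat.cast_pos.mpr (NeZero.pos m)
  have hΓ : ∀ k ∈ range m, Real.Gamma ((x + k) / m) ≠ 0 := fun k _ ↦ (Gamma_add_div_pos hx k).ne'
  rw [gaussProduct, Real.log_mul (Real.rpow_pos_of_pos hm x).ne' (prod_ne_zero_iff.mpr hΓ),
    Real.log_rpow hm, Real.log_prod hΓ]

theorem gaussProduct_add_one (hx : 0 < x) : gaussProduct m (x + 1) = x * gaussProduct m x := by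
  have hm : (0 : ℝ) < m := Nat.cast_pos.mpr (NeZero.pos m)
  have hΓ : Real.Gamma (x / m) ≠ 0 := (Real.Gamma_pos_of_pos (by positivity)).ne'
  have hlast : Real.Gamma ((x + m) / m) = x / m * Real.Gamma (x / m) := by
    rw [add_div, div_self hm.ne', Real.Gamma_add_one (by positivity)]
  have hshift : ∏ k ∈ range m, Real.Gamma ((x + 1 + k) / m) =
      x / m * ∏ k ∈ range m, Real.Gamma ((x + k) / m) := by
    have h := prod_range_succ' (fun k : ℕ ↦ Real.Gamma ((x + k) / m)) m
    simp only [prod_range_succ, hlast, Nat.cast_add, Nat.cast_one, Nat.cast_zero, add_zero] at h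
    refine mul_right_cancel₀ hΓ ?_
    simp only [add_assoc, add_comm (1 : ℝ), ← h]
    ring
  rw [gaussProduct, gaussProduct, hshift, Real.rpow_add hm, Real.rpow_one]
  field_simp

theorem convexOn_log_Gamma_add_div (k : ℕ) :
    ConvexOn ℝ (Set.Ioi (0 : ℝ)) fun x ↦ Real.log (Real.Gamma ((x + k) / m)) := by
  have hm : (0 : ℝ) < m := Nat.cast_pos.mpr (NeZero.pos m)
  have h := Real.convexOn_log_Gamma.comp_affineMap
    ((m : ℝ)⁻¹ • (AffineMap.id ℝ ℝ + AffineMap.const ℝ ℝ (k : ℝ)))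
  refine (h.subset (fun x hx ↦ ?_) (convex_Ioi 0)).congr fun x _ ↦ ?_
  · have hx : 0 < (m : ℝ)⁻¹ * (x + k) :=
      mul_pos (inv_pos.mpr hm) (add_pos_of_pos_of_nonneg hx k.cast_nonneg)
    simpa [mul_add] using hx
  · simp [div_eq_inv_mul, mul_add]

theorem convexOn_log_gaussProduct :
    ConvexOn ℝ (Set.Ioi 0) (Real.log ∘ gaussProduct m) := by
  have hsum : ∀ n : ℕ, ConvexOn ℝ (Set.Ioi (0 : ℝ))
      fun x ↦ ∑ k ∈ range n, Real.log (Real.Gamma ((x + k) / m)) := by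
    intro n
    induction n with
    | zero => simpa using convexOn_const (0 : ℝ) (convex_Ioi (0 : ℝ))
    | succ n ih =>
      simp only [sum_range_succ]
      exact ih.add (convexOn_log_Gamma_add_div n)
  have hlin : ConvexOn ℝ (Set.Ioi (0 : ℝ)) fun x ↦ x * Real.log m :=
    (LinearMap.mulRight ℝ (Real.log m)).convexOn (convex_Ioi 0)
  exact (hlin.add (hsum m)).congr fun x hx ↦ (log_gaussProduct hx).symm

theorem gaussProduct_eq_mul_Gamma (hx : 0 < x) :
    gaussProduct m x = gaussProduct m 1 * Real.Gamma x :=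
  eq_mul_Gamma_of_log_convex convexOn_log_gaussProduct gaussProduct_add_one gaussProduct_pos hx

end GaussMultiplication

/-! ### Logarithms of algebraic numbers and of Gamma values -/

section GammaLogs

/-- The `ℚ`-vector space of real logarithms of positive algebraic numbers. -/
noncomputable def algebraicLog : Submodule ℚ ℝ where
  carrier := {x | IsAlgebraic ℚ (Real.exp x)}
  add_mem' {x y} hx hy := by
    have h : IsAlgebraic ℚ (Real.exp x * Real.exp y) := hx.mul hy
    rwa [← Real.exp_add] at h
  zero_mem' := by simpa using isAlgebraic_one
  smul_mem' c x hx := by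
    have hpow : Real.exp (c • x) ^ c.den = Real.exp x ^ c.num := by
      have hc : (c.den : ℝ) * c = c.num := mod_cast Rat.den_mul_eq_num c
      rw [← Real.exp_nat_mul, ← Real.rpow_intCast, ← Real.exp_mul, Rat.smul_def, ← mul_assoc, hc,
        mul_comm]
    refine IsAlgebraic.of_pow c.den_pos (hpow ▸ ?_)
    exact mem_algebraicClosure_iff.mp (zpow_mem (mem_algebraicClosure_iff.mpr hx) c.num)

theorem mem_algebraicLog {x : ℝ} : x ∈ algebraicLog ↔ IsAlgebraic ℚ (Real.exp x) :=
  Iff.rfl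

theorem log_mem_algebraicLog {x : ℝ} (hpos : 0 < x) (hx : IsAlgebraic ℚ x) :
    Real.log x ∈ algebraicLog := by
  rwa [mem_algebraicLog, Real.exp_log hpos]

theorem log_natCast_mem_algebraicLog (d : ℕ) [NeZero d] : Real.log d ∈ algebraicLog :=
  log_mem_algebraicLog (Nat.cast_pos.mpr (NeZero.pos d)) (isAlgebraic_natCast d)

/-- The logarithm of `Γ(x) / √π`, the normalization for which the reflection and multiplication
formulas lose their powers of `π`. Its value at `0` is the junk value `0`. -/
noncomputable def normLogGamma (x : ℚ) : ℝ :=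
  Real.log (Real.Gamma x / √Real.pi)

theorem normLogGamma_zero : normLogGamma 0 = 0 := by
  simp [normLogGamma]

theorem normLogGamma_of_pos {x : ℚ} (hx : 0 < x) :
    normLogGamma x = Real.log (Real.Gamma x) - Real.log Real.pi / 2 := by
  rw [normLogGamma, Real.log_div (Real.Gamma_pos_of_pos (mod_cast hx)).ne'
    (Real.sqrt_pos.mpr Real.pi_pos).ne', Real.log_sqrt Real.pi_pos.le]

theorem exp_normLogGamma {x : ℚ} (hx : 0 < x) :
    Real.exp (normLogGamma x) = Real.Gamma x / √Real.pi :=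
  Real.exp_log (div_pos (Real.Gamma_pos_of_pos (mod_cast hx)) (Real.sqrt_pos.mpr Real.pi_pos))

theorem normLogGamma_add_one_sub_mem {x : ℚ} (h0 : 0 < x) (h1 : x < 1) :
    normLogGamma x + normLogGamma (1 - x) ∈ algebraicLog := by
  have hx0 : (0 : ℝ) < x := mod_cast h0
  have hx1 : (x : ℝ) < 1 := mod_cast h1
  have hsin : 0 < Real.sin (Real.pi * x) :=
    Real.sin_pos_of_pos_of_lt_pi (by positivity) (mul_lt_of_lt_one_right Real.pi_pos hx1)
  have hrefl : normLogGamma x + normLogGamma (1 - x) = -Real.log (Real.sin (Real.pi * x)) := by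
    have h := congrArg Real.log (Real.Gamma_mul_Gamma_one_sub x)
    rw [Real.log_mul (Real.Gamma_pos_of_pos hx0).ne' (Real.Gamma_pos_of_pos (by linarith)).ne',
      Real.log_div Real.pi_pos.ne' hsin.ne'] at h
    rw [normLogGamma_of_pos h0, normLogGamma_of_pos (by linarith), Rat.cast_sub, Rat.cast_one]
    linarith
  rw [hrefl, mul_comm Real.pi]
  refine neg_mem (log_mem_algebraicLog (by rwa [mul_comm]) ?_)
  exact (Real.isAlgebraic_sin_rat_mul_pi x).extendScalars (algebraMap ℤ ℚ).injective_int

theorem sum_range_normLogGamma_div_mem (d : ℕ) :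
    ∑ k ∈ range d, normLogGamma (k / d) ∈ algebraicLog := by
  obtain _ | e := d
  · simp
  have hdrop : ∑ k ∈ range (e + 1), normLogGamma (k / (e + 1 : ℕ)) =
      ∑ k ∈ range e, normLogGamma ((k + 1 : ℕ) / (e + 1 : ℕ)) := by
    rw [sum_range_succ', Nat.cast_zero, zero_div, normLogGamma_zero, add_zero]
  have hreflect : ∑ k ∈ range e, normLogGamma ((k + 1 : ℕ) / (e + 1 : ℕ)) =
      ∑ k ∈ range e, normLogGamma (1 - (k + 1 : ℕ) / (e + 1 : ℕ)) := by
    rw [← sum_range_reflect]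
    refine sum_congr rfl fun k hk ↦ congrArg _ ?_
    have hk : e - 1 - k + 1 + (k + 1) = e + 1 := by have := mem_range.mp hk; omega
    rw [eq_sub_iff_add_eq, ← add_div, ← Nat.cast_add, hk, div_self (by positivity)]
  have htwice : ∑ k ∈ range e, normLogGamma ((k + 1 : ℕ) / (e + 1 : ℕ)) +
      ∑ k ∈ range e, normLogGamma ((k + 1 : ℕ) / (e + 1 : ℕ)) ∈ algebraicLog := by
    nth_rw 2 [hreflect]
    rw [← sum_add_distrib]
    refine sum_mem fun k hk ↦ normLogGamma_add_one_sub_mem (by positivity) ?_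
    rw [div_lt_one (by positivity), Nat.cast_lt]
    exact Nat.succ_lt_succ (mem_range.mp hk)
  rw [← two_smul ℚ] at htwice
  rw [hdrop]
  exact (Submodule.smul_mem_iff _ two_ne_zero).mp htwice

theorem sum_range_normLogGamma_add_div (d : ℕ) [NeZero d] {y : ℚ} (hy : 0 < y) :
    ∑ k ∈ range d, normLogGamma ((y + k) / d) =
      Real.log (gaussProduct d y) - y * Real.log d - d * (Real.log Real.pi / 2) := by
  have hd : (0 : ℚ) < d := Nat.cast_pos.mpr (NeZero.pos d)
  have hterm : ∀ k ∈ range d, normLogGamma ((y + k) / d) =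
      Real.log (Real.Gamma ((y + k) / d)) - Real.log Real.pi / 2 := fun k _ ↦ by
    rw [normLogGamma_of_pos (by positivity), Rat.cast_div, Rat.cast_add, Rat.cast_natCast,
      Rat.cast_natCast]
  rw [log_gaussProduct (mod_cast hy), sum_congr rfl hterm, sum_sub_distrib, sum_const, card_range,
    nsmul_eq_mul]
  ring

theorem sum_range_normLogGamma_sub_mem (d : ℕ) [NeZero d] {y : ℚ} (hy : 0 ≤ y) :
    ∑ k ∈ range d, normLogGamma ((y + k) / d) - normLogGamma y ∈ algebraicLog := by
  have hd : (d : ℚ) ≠ 0 := Nat.cast_ne_zero.mpr (NeZero.ne d)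
  have hT := sum_range_normLogGamma_div_mem d
  obtain rfl | hy := hy.eq_or_lt
  · simpa only [zero_add, normLogGamma_zero, sub_zero] using hT
  have hshift : ∑ k ∈ range d, normLogGamma ((1 + k) / d) =
      ∑ k ∈ range d, normLogGamma (k / d) + normLogGamma 1 := by
    have h := sum_range_succ' (fun k : ℕ ↦ normLogGamma (k / d)) d
    rw [sum_range_succ, div_self hd, Nat.cast_zero, zero_div, normLogGamma_zero, add_zero] at h
    simpa only [Nat.cast_add, Nat.cast_one, add_comm (1 : ℚ)] using h.symm
  have hgauss : ∑ k ∈ range d, normLogGamma ((y + k) / d) - normLogGamma y =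
      ∑ k ∈ range d, normLogGamma (k / d) + (1 - y) • Real.log d := by
    have hyR : (0 : ℝ) < y := mod_cast hy
    have h := sum_range_normLogGamma_add_div d one_pos
    rw [hshift, normLogGamma_of_pos one_pos, Rat.cast_one, Real.Gamma_one, Real.log_one] at h
    rw [sum_range_normLogGamma_add_div d hy, gaussProduct_eq_mul_Gamma hyR,
      Real.log_mul (gaussProduct_pos one_pos).ne' (Real.Gamma_pos_of_pos hyR).ne',
      normLogGamma_of_pos hy, Rat.smul_def, Rat.cast_sub, Rat.cast_one]
    linarith
  rw [hgauss]
  exact add_mem hT (Submodule.smul_mem _ _ (log_natCast_mem_algebraicLog d))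

end GammaLogs

/-! ### Distributions on `ℤ/Nℤ` -/

section Distributions

variable {N : ℕ} [NeZero N] {A B : Type*}

/-- Kubert's distribution relations on `ℤ/Nℤ`, identified with `(1/N)ℤ/ℤ`: the sum of `f` over
each fibre of multiplication by a divisor `d` of `N` is the value of `f` below it. The fibre is
written as `{y | d * y = d * x}`. -/
def IsDistribution [AddCommMonoid A] (f : ZMod N → A) : Prop :=
  ∀ d : ℕ, d ∣ N → ∀ x : ZMod N, ∑ y with (d : ZMod N) * y = d * x, f y = f (d * x)

namespace IsDistribution

theorem map [AddCommMonoid A] [AddCommMonoid B] {f : ZMod N → A} (hf : IsDistribution f)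
    (g : A →+ B) : IsDistribution fun x ↦ g (f x) := fun d hd x ↦ by
  rw [← map_sum, hf d hd x]

theorem sub [AddCommGroup A] {f g : ZMod N → A} (hf : IsDistribution f) (hg : IsDistribution g) :
    IsDistribution fun x ↦ f x - g x := fun d hd x ↦ by
  rw [sum_sub_distrib, hf d hd x, hg d hd x]

theorem sum [AddCommMonoid A] {ι : Type*} {s : Finset ι} {f : ι → ZMod N → A}
    (hf : ∀ i ∈ s, IsDistribution (f i)) : IsDistribution fun x ↦ ∑ i ∈ s, f i x := fun d hd x ↦ by
  rw [sum_comm, sum_congr rfl fun i hi ↦ hf i hi d hd x]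

theorem comp_unit_mul [AddCommMonoid A] {f : ZMod N → A} (hf : IsDistribution f)
    (u : (ZMod N)ˣ) : IsDistribution fun x : ZMod N ↦ f (u * x) := fun d hd x ↦ by
  simp only [mul_left_comm (u : ZMod N), ← hf d hd (u * x)]
  refine sum_equiv u.mulLeft (fun y ↦ ?_) fun y _ ↦ rfl
  simp only [mem_filter_univ, Units.mulLeft_apply, mul_left_comm (d : ZMod N), u.mul_right_inj]

end IsDistribution

/-- The representative of `a / N` in `[0, 1)`. -/
def fracPart (a : ZMod N) : ℚ := a.val / N

omit [NeZero N] in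
theorem fracPart_natCast_of_lt {a : ℕ} (ha : a < N) : fracPart (a : ZMod N) = a / N := by
  rw [fracPart, ZMod.val_cast_of_lt ha]

theorem fracPart_lt_one (a : ZMod N) : fracPart a < 1 :=
  (div_lt_one (Nat.cast_pos.mpr (NeZero.pos N))).mpr (Nat.cast_lt.mpr a.val_lt)

theorem fracPart_eq_zero {a : ZMod N} : fracPart a = 0 ↔ a = 0 := by
  rw [fracPart, div_eq_zero_iff, or_iff_left (NeZero.ne (N : ℚ)), Nat.cast_eq_zero,
    ZMod.val_eq_zero]

theorem fracPart_pos {a : ZMod N} (ha : a ≠ 0) : 0 < fracPart a :=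
  (div_nonneg a.val.cast_nonneg N.cast_nonneg).lt_of_ne' (mt fracPart_eq_zero.mp ha)

theorem fracPart_neg {a : ZMod N} (ha : a ≠ 0) : fracPart (-a) = 1 - fracPart a := by
  have : NeZero a := ⟨ha⟩
  rw [fracPart, ZMod.val_neg_of_ne_zero, Nat.cast_sub a.val_lt.le, sub_div,
    div_self (NeZero.ne (N : ℚ)), fracPart]

theorem fracPart_intCast (m : ℤ) : fracPart (m : ZMod N) = Int.fract ((m : ℚ) / N) := by
  have h := Int.fract_div_intCast_eq_div_intCast_mod (k := ℚ) (m := m) (n := N)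
  rw [← ZMod.val_intCast, Int.cast_natCast] at h
  exact h.symm

theorem odd_comp_fracPart [AddGroup A] {ψ : ℚ → A} (h0 : ψ 0 = 0)
    (hψ : ∀ x, 0 < x → x < 1 → ψ (1 - x) = -ψ x) :
    Function.Odd fun a : ZMod N ↦ ψ (fracPart a) := fun a ↦ by
  obtain rfl | ha := eq_or_ne a 0
  · simp [fracPart_eq_zero.mpr, h0]
  · simp only [fracPart_neg ha, hψ _ (fracPart_pos ha) (fracPart_lt_one a)]

theorem natCast_mul_eq_natCast_mul_iff {d n : ℕ} [NeZero (d * n)] {x y : ZMod (d * n)} :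
    (d : ZMod (d * n)) * y = d * x ↔ y.val ≡ x.val [MOD n] := by
  have hd : d ≠ 0 := left_ne_zero_of_mul (NeZero.ne (d * n))
  rw [← Nat.ModEq.mul_left_cancel_iff' hd, ← ZMod.natCast_eq_natCast_iff]
  simp

theorem mod_add_mul_lt {d n : ℕ} [NeZero (d * n)] (a : ℕ) {k : ℕ} (hk : k < d) :
    a % n + n * k < d * n := by
  have hn : a % n < n := Nat.mod_lt a (Nat.pos_of_mul_pos_left (NeZero.pos (d * n)))
  nlinarith

theorem sum_fibre_natCast_mul [AddCommMonoid A] {d n : ℕ} [NeZero (d * n)]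
    (f : ZMod (d * n) → A) (x : ZMod (d * n)) :
    ∑ y with (d : ZMod (d * n)) * y = d * x, f y =
      ∑ k ∈ range d, f (x.val % n + n * k : ℕ) := by
  have hn : 0 < n := Nat.pos_of_mul_pos_left (NeZero.pos (d * n))
  have hval : ∀ k ∈ range d, ((x.val % n + n * k : ℕ) : ZMod (d * n)).val = x.val % n + n * k :=
    fun k hk ↦ ZMod.val_cast_of_lt (mod_add_mul_lt _ (mem_range.mp hk))
  refine (sum_nbij' (fun k ↦ ((x.val % n + n * k : ℕ) : ZMod (d * n))) (fun y ↦ y.val / n)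
    (fun k hk ↦ ?_) (fun y _ ↦ ?_) (fun k hk ↦ ?_) (fun y hy ↦ ?_) fun k _ ↦ rfl).symm
  · rw [mem_filter_univ, natCast_mul_eq_natCast_mul_iff, hval k hk]
    simp [Nat.ModEq]
  · exact mem_range.mpr (Nat.div_lt_of_lt_mul (y.val_lt.trans_eq (mul_comm d n)))
  · rw [hval k hk, Nat.add_mul_div_left _ _ hn, Nat.div_eq_of_lt (Nat.mod_lt _ hn), zero_add]
  · rw [mem_filter_univ, natCast_mul_eq_natCast_mul_iff] at hy
    rw [← hy, Nat.mod_add_div, ZMod.natCast_zmod_val]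

theorem isDistribution_comp_fracPart [AddCommMonoid A] {ψ : ℚ → A}
    (hψ : ∀ d : ℕ, d ≠ 0 → ∀ y, 0 ≤ y → y < 1 → ∑ k ∈ range d, ψ ((y + k) / d) = ψ y) :
    IsDistribution fun a : ZMod N ↦ ψ (fracPart a) := by
  rintro d ⟨n, rfl⟩ x
  have hd : 0 < d := Nat.pos_of_mul_pos_right (NeZero.pos (d * n))
  have hn : 0 < n := Nat.pos_of_mul_pos_left (NeZero.pos (d * n))
  have hr : x.val % n < n := Nat.mod_lt _ hn
  have hfibre : ∀ k ∈ range d, fracPart ((x.val % n + n * k : ℕ) : ZMod (d * n)) =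
      ((x.val % n : ℕ) / n + k) / d := fun k hk ↦ by
    rw [fracPart_natCast_of_lt (mod_add_mul_lt _ (mem_range.mp hk)), Nat.cast_add, Nat.cast_mul,
      Nat.cast_mul]
    field_simp
  have hbase : fracPart ((d : ZMod (d * n)) * x) = (x.val % n : ℕ) / n := by
    have hx : (d : ZMod (d * n)) * x = (d * (x.val % n) : ℕ) := by
      rw [Nat.cast_mul, natCast_mul_eq_natCast_mul_iff,
        ZMod.val_cast_of_lt (hr.trans_le (Nat.le_mul_of_pos_left n hd))]
      exact (Nat.mod_modEq _ _).symm
    rw [hx, fracPart_natCast_of_lt (Nat.mul_lt_mul_of_pos_left hr hd), Nat.cast_mul, Nat.cast_mul,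
      mul_div_mul_left _ _ (by positivity)]
  simp only [sum_fibre_natCast_mul, sum_congr rfl fun k hk ↦ congrArg ψ (hfibre k hk), hbase]
  exact hψ d hd.ne' _ (by positivity) ((div_lt_one (by positivity)).mpr (Nat.cast_lt.mpr hr))

/-- The first Bernoulli function `B₁({x})` restricted to `[0, 1)`, with the value `0` at the
jump so that it is odd. -/
def sawtooth (x : ℚ) : ℚ := if x = 0 then 0 else x - 1 / 2

theorem sawtooth_zero : sawtooth 0 = 0 := if_pos rfl

theorem sawtooth_of_ne_zero {x : ℚ} (hx : x ≠ 0) : sawtooth x = x - 1 / 2 := if_neg hx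

theorem sum_range_add_div_sub_half {d : ℕ} (hd : d ≠ 0) (y : ℚ) :
    ∑ k ∈ range d, ((y + k) / d - 1 / 2) = y - 1 / 2 := by
  have hd' : (d : ℚ) ≠ 0 := Nat.cast_ne_zero.mpr hd
  have hgauss : ∑ k ∈ range d, (k : ℚ) = d * (d - 1) / 2 := by
    have h := sum_range_id_mul_two d
    rw [← Nat.cast_inj (R := ℚ)] at h
    push_cast [Nat.cast_sub (Nat.one_le_iff_ne_zero.mpr hd)] at h
    linarith
  simp only [sum_sub_distrib, ← sum_div, sum_add_distrib, sum_const, card_range, nsmul_eq_mul,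
    hgauss]
  field_simp
  ring

theorem sum_range_sawtooth_add_div {d : ℕ} (hd : d ≠ 0) {y : ℚ} (hy : 0 ≤ y) :
    ∑ k ∈ range d, sawtooth ((y + k) / d) = sawtooth y := by
  have h := sum_range_add_div_sub_half hd y
  obtain rfl | hy := hy.eq_or_lt
  · obtain ⟨e, rfl⟩ := Nat.exists_eq_succ_of_ne_zero hd
    have hterm : ∀ k ∈ range e, sawtooth ((0 + (k + 1 : ℕ)) / (e + 1 : ℕ)) =
        (0 + (k + 1 : ℕ)) / (e + 1 : ℕ) - 1 / 2 := fun k _ ↦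
      sawtooth_of_ne_zero (by positivity)
    rw [sum_range_succ'] at h ⊢
    rw [sum_congr rfl hterm]
    simp only [Nat.cast_zero, add_zero, zero_div, sawtooth_zero] at h ⊢
    linarith
  · have hterm : ∀ k ∈ range d, sawtooth ((y + k) / d) = (y + k) / d - 1 / 2 := fun k _ ↦
      sawtooth_of_ne_zero (by positivity)
    rw [sum_congr rfl hterm, h, sawtooth_of_ne_zero hy.ne']

/-- The first Bernoulli distribution on `ℤ/Nℤ`, which will turn out to generate all odd
distributions. -/
noncomputable def bernoulliDist (a : ZMod N) : ℂ := (sawtooth (fracPart a) : ℚ)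

theorem isDistribution_bernoulliDist : IsDistribution (bernoulliDist (N := N)) :=
  isDistribution_comp_fracPart (ψ := fun x ↦ (sawtooth x : ℂ)) fun d hd y hy _ ↦ by
    rw [← Rat.cast_sum, sum_range_sawtooth_add_div hd hy]

end Distributions

/-! ### The odd periodic zeta function at `1` -/

section SinZeta

open Complex Filter Topology HurwitzZeta MeasureTheory
open scoped ComplexConjugate

theorem re_lt_one_of_norm_le_one {z : ℂ} (hz : ‖z‖ ≤ 1) (hz1 : z ≠ 1) : z.re < 1 := by
  refine (z.re_le_norm.trans hz).lt_of_ne fun hre ↦ hz1 (Complex.ext hre ?_)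
  have hnorm : z.re = ‖z‖ := le_antisymm z.re_le_norm (hz.trans_eq hre.symm)
  exact (nonneg_iff.mp (re_eq_norm.mp hnorm)).2.symm

/-- The sum `∑ n ≥ 1, zⁿ e^{-nt}`, whose Mellin transform at `s` is `Γ(s) ∑ n ≥ 1, zⁿ / nˢ`. -/
noncomputable def geomKernel (z : ℂ) (t : ℝ) : ℂ :=
  z * Real.exp (-t) / (1 - z * Real.exp (-t))

section GeomKernel

variable {z : ℂ}

theorem hasSum_geomKernel (hz : ‖z‖ ≤ 1) {t : ℝ} (ht : 0 < t) :
    HasSum (fun n : ℕ ↦ z ^ (n + 1) * Real.exp (-(n + 1 : ℝ) * t)) (geomKernel z t) := by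
  have hlt : ‖z * Real.exp (-t)‖ < 1 := by
    rw [norm_mul, norm_real, Real.norm_eq_abs, Real.abs_exp]
    exact mul_lt_one_of_nonneg_of_lt_one_right hz (Real.exp_nonneg _)
      (Real.exp_lt_one_iff.mpr (neg_neg_of_pos ht))
  have h := (hasSum_geometric_of_norm_lt_one hlt).mul_left (z * Real.exp (-t))
  rw [← div_eq_mul_inv] at h
  refine h.congr_fun fun n ↦ ?_
  rw [← pow_succ', mul_pow, ← ofReal_pow, ← Real.exp_nat_mul]
  push_cast
  ring_nf

variable (hz : ‖z‖ ≤ 1) (hz1 : z ≠ 1)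
include hz hz1

theorem one_sub_mul_exp_neg_mem_slitPlane {t : ℝ} (ht : 0 ≤ t) :
    1 - z * Real.exp (-t) ∈ slitPlane := by
  have hre := re_lt_one_of_norm_le_one hz hz1
  have hexp : Real.exp (-t) ≤ 1 := Real.exp_le_one_iff.mpr (neg_nonpos.mpr ht)
  refine Or.inl ?_
  rw [sub_re, one_re, re_mul_ofReal, sub_pos]
  nlinarith [Real.exp_pos (-t)]

theorem continuousOn_geomKernel : ContinuousOn (geomKernel z) (Set.Ici 0) := by
  unfold geomKernel
  exact ContinuousOn.div (by fun_prop) (by fun_prop) fun t ht ↦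
    slitPlane_ne_zero (one_sub_mul_exp_neg_mem_slitPlane hz hz1 ht)

omit hz hz1 in
theorem tendsto_one_sub_mul_exp_neg_atTop (z : ℂ) :
    Tendsto (fun t : ℝ ↦ 1 - z * Real.exp (-t)) atTop (𝓝 1) := by
  have h := (continuous_ofReal.tendsto _).comp Real.tendsto_exp_neg_atTop_nhds_zero
  simpa using (h.const_mul z).const_sub 1

omit hz hz1 in
theorem isBigO_atTop_geomKernel (z : ℂ) :
    geomKernel z =O[atTop] fun t ↦ Real.exp (-(1 : ℝ) * t) := by
  have hbdd : (fun t : ℝ ↦ z / (1 - z * Real.exp (-t))) =O[atTop] fun _ ↦ (1 : ℝ) :=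
    (tendsto_const_nhds.div (tendsto_one_sub_mul_exp_neg_atTop z) one_ne_zero).isBigO_one ℝ
  have hexp : (fun t : ℝ ↦ (Real.exp (-t) : ℂ)) =O[atTop] fun t ↦ Real.exp (-(1 : ℝ) * t) :=
    .of_bound 1 (.of_forall fun t ↦ by rw [norm_real, neg_one_mul, one_mul])
  refine (hbdd.mul hexp).congr (fun t ↦ ?_) fun t ↦ one_mul _
  rw [geomKernel, div_mul_eq_mul_div]

theorem isBigO_nhdsWithin_geomKernel :
    geomKernel z =O[𝓝[>] 0] fun t : ℝ ↦ t ^ (-(0 : ℝ)) := by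
  have h : Tendsto (geomKernel z) (𝓝[>] 0) (𝓝 (geomKernel z 0)) :=
    (continuousOn_geomKernel hz hz1 0 Set.self_mem_Ici).mono_left
      (nhdsWithin_mono _ Set.Ioi_subset_Ici_self)
  simpa using h.isBigO_one ℝ

theorem locallyIntegrableOn_geomKernel : LocallyIntegrableOn (geomKernel z) (Set.Ioi 0) :=
  ((continuousOn_geomKernel hz hz1).mono Set.Ioi_subset_Ici_self).locallyIntegrableOn
    measurableSet_Ioi

theorem differentiableAt_mellin_geomKernel {s : ℂ} (hs : 0 < s.re) :
    DifferentiableAt ℂ (mellin (geomKernel z)) s :=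
  mellin_differentiableAt_of_isBigO_rpow_exp one_pos (locallyIntegrableOn_geomKernel hz hz1)
    (isBigO_atTop_geomKernel z) (isBigO_nhdsWithin_geomKernel hz hz1) hs

theorem integrableOn_geomKernel : IntegrableOn (geomKernel z) (Set.Ioi 0) := by
  have h := mellinConvergent_of_isBigO_rpow_exp (s := 1) one_pos
    (locallyIntegrableOn_geomKernel hz hz1) (isBigO_atTop_geomKernel z)
    (isBigO_nhdsWithin_geomKernel hz hz1) (by simp)
  simpa [MellinConvergent] using h

theorem hasDerivAt_log_one_sub_mul_exp_neg {t : ℝ} (ht : 0 ≤ t) :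
    HasDerivAt (fun t : ℝ ↦ log (1 - z * Real.exp (-t))) (geomKernel z t) t := by
  have h := (((hasDerivAt_neg t).exp.ofReal_comp.const_mul z).const_sub 1).clog_real
    (one_sub_mul_exp_neg_mem_slitPlane hz hz1 ht)
  refine h.congr_deriv ?_
  rw [geomKernel]
  simp

theorem mellin_geomKernel_one : mellin (geomKernel z) 1 = -log (1 - z) := by
  have hlim : Tendsto (fun t : ℝ ↦ log (1 - z * Real.exp (-t))) atTop (𝓝 (log 1)) :=
    (continuousAt_clog one_mem_slitPlane).tendsto.comp (tendsto_one_sub_mul_exp_neg_atTop z)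
  have hint := integral_Ioi_of_hasDerivAt_of_tendsto'
    (fun t ht ↦ hasDerivAt_log_one_sub_mul_exp_neg hz hz1 ht)
    (integrableOn_geomKernel hz hz1) hlim
  simpa [mellin] using hint

end GeomKernel

theorem norm_exp_two_pi_I_mul (x : ℝ) : ‖cexp (2 * Real.pi * I * x)‖ = 1 := by
  simp [norm_exp]

theorem exp_two_pi_I_mul_ne_one {x : ℝ} (h0 : 0 < x) (h1 : x < 1) :
    cexp (2 * Real.pi * I * x) ≠ 1 := by
  rw [Ne, exp_eq_one_iff]
  rintro ⟨n, hn⟩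
  have hxn : x = n := by
    rw [mul_comm] at hn
    exact_mod_cast mul_right_cancel₀ two_pi_I_ne_zero hn
  rw [hxn] at h0 h1
  norm_cast at h0 h1
  lia

theorem mellin_geomKernel_exp (x : ℝ) {s : ℂ} (hs : 1 < s.re) :
    mellin (geomKernel (cexp (2 * Real.pi * I * x))) s = Gamma s * expZeta x s := by
  have hnorm := norm_exp_two_pi_I_mul x
  have hs0 : s ≠ 0 := ne_zero_of_one_lt_re hs
  have hzeta := hasSum_expZeta_of_one_lt_re x hs
  rw [← hasSum_nat_add_iff' 1] at hzeta
  simp only [sum_range_one, Nat.cast_zero, zero_cpow hs0, div_zero, sub_zero] at hzeta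
  have hsummable : Summable fun n : ℕ ↦
      ‖cexp (2 * Real.pi * I * x) ^ (n + 1)‖ / ((n : ℝ) + 1) ^ s.re := by
    refine ((summable_nat_add_iff 1).mpr (Real.summable_nat_rpow_inv.mpr hs)).congr fun n ↦ ?_
    rw [norm_pow, hnorm, one_pow, one_div, Nat.cast_add_one]
  refine (hasSum_mellin (fun n ↦ Or.inr (by positivity)) (zero_lt_one.trans hs)
    (fun t ht ↦ hasSum_geomKernel hnorm.le ht) hsummable).unique ?_
  refine (hzeta.mul_left (Gamma s)).congr_fun fun n ↦ ?_
  rw [← exp_nat_mul, mul_div_assoc]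
  push_cast
  ring_nf

theorem expZeta_one {x : ℝ} (h0 : 0 < x) (h1 : x < 1) :
    expZeta x 1 = -log (1 - cexp (2 * Real.pi * I * x)) := by
  have hx : (x : UnitAddCircle) ≠ 0 :=
    (AddCircle.coe_eq_zero_iff_of_mem_Ico ⟨h0.le, h1⟩).not.mpr h0.ne'
  have hz : ‖cexp (2 * Real.pi * I * x)‖ ≤ 1 := (norm_exp_two_pi_I_mul x).le
  have hz1 : cexp (2 * Real.pi * I * x) ≠ 1 := exp_two_pi_I_mul_ne_one h0 h1
  have hmellin := (differentiableAt_mellin_geomKernel hz hz1 (s := 1) (by simp)).continuousAt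
  have hzeta : ContinuousAt (fun s ↦ Gamma s * expZeta x s) 1 :=
    differentiableAt_Gamma_one.continuousAt.mul
      (differentiable_expZeta_of_ne_zero hx 1).continuousAt
  have hfreq : ∃ᶠ s in 𝓝 (1 : ℂ),
      mellin (geomKernel (cexp (2 * Real.pi * I * x))) s = Gamma s * expZeta x s := by
    have hmem : (1 : ℂ) ∈ closure {s : ℂ | 1 < s.re} := by
      rw [closure_setOfPred_lt_re]
      exact one_re.ge
    exact (mem_closure_iff_frequently.mp hmem).mono fun s hs ↦ mellin_geomKernel_exp x hs
  calc expZeta x 1 = Gamma 1 * expZeta x 1 := by rw [Gamma_one, one_mul]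
    _ = mellin (geomKernel (cexp (2 * Real.pi * I * x))) 1 :=
      (tendsto_nhds_unique_of_frequently_eq hmellin hzeta hfreq).symm
    _ = -log (1 - cexp (2 * Real.pi * I * x)) := mellin_geomKernel_one hz hz1

theorem one_sub_exp_two_pi_I_mul (x : ℝ) :
    1 - cexp (2 * Real.pi * I * x) = (2 * Real.sin (Real.pi * x) : ℝ) *
      (cos (Real.pi * x - Real.pi / 2 : ℝ) + sin (Real.pi * x - Real.pi / 2 : ℝ) * I) := by
  have hexp : cexp (2 * Real.pi * I * x) = cexp (2 * (Real.pi * x : ℝ) * I) := by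
    congr 1
    push_cast
    ring
  rw [hexp, exp_mul_I, cos_two_mul, sin_two_mul, ← ofReal_cos, ← ofReal_sin, ← ofReal_cos,
    ← ofReal_sin, Real.cos_sub_pi_div_two, Real.sin_sub_pi_div_two]
  have hpyth : (Real.sin (Real.pi * x) : ℂ) ^ 2 + Real.cos (Real.pi * x) ^ 2 = 1 :=
    mod_cast Real.sin_sq_add_cos_sq _
  push_cast at hpyth ⊢
  linear_combination -2 * hpyth

theorem arg_one_sub_exp_two_pi_I_mul {x : ℝ} (h0 : 0 < x) (h1 : x < 1) :
    arg (1 - cexp (2 * Real.pi * I * x)) = Real.pi * (x - 1 / 2) := by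
  have hπ := Real.pi_pos
  have hsin : 0 < Real.sin (Real.pi * x) :=
    Real.sin_pos_of_pos_of_lt_pi (by positivity) (mul_lt_of_lt_one_right hπ h1)
  rw [one_sub_exp_two_pi_I_mul, arg_mul_cos_add_sin_mul_I (by positivity)
    ⟨by nlinarith, by nlinarith⟩]
  ring

theorem sinZeta_one {x : ℝ} (h0 : 0 < x) (h1 : x < 1) :
    sinZeta x 1 = Real.pi * (1 / 2 - x) := by
  set z := 1 - cexp (2 * Real.pi * I * x) with hz
  have harg : arg z = Real.pi * (x - 1 / 2) := arg_one_sub_exp_two_pi_I_mul h0 h1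
  have hconj : 1 - cexp (2 * Real.pi * I * (1 - x : ℝ)) = conj z := by
    rw [hz, map_sub, map_one, ← exp_conj]
    congr 1
    refine exp_eq_exp_iff_exists_int.mpr ⟨1, ?_⟩
    simp only [map_mul, conj_ofReal, conj_I, map_ofNat]
    push_cast
    ring
  have harg_ne : arg z ≠ Real.pi := by
    rw [harg]
    nlinarith [Real.pi_pos]
  have hneg : -(x : UnitAddCircle) = ((1 - x : ℝ) : UnitAddCircle) := by
    rw [AddCircle.coe_sub, AddCircle.coe_period, zero_sub]
  rw [sinZeta_eq, hneg, expZeta_one h0 h1, expZeta_one (sub_pos.mpr h1) (sub_lt_self 1 h0), hconj,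
    log_conj _ harg_ne, neg_sub_neg, ← neg_sub, sub_conj, log_im, harg]
  field_simp
  push_cast
  ring

variable {N : ℕ} [NeZero N]

theorem sinZeta_toAddCircle_one (j : ZMod N) :
    sinZeta (ZMod.toAddCircle j) 1 = -Real.pi * bernoulliDist j := by
  obtain rfl | hj := eq_or_ne j 0
  · have hzero : sinZeta 0 1 = 0 := self_eq_neg.mp (by rw [← sinZeta_neg, neg_zero])
    simp [bernoulliDist, fracPart_eq_zero.mpr, sawtooth_zero, hzero]
  · have hj0 : (0 : ℝ) < fracPart j := mod_cast fracPart_pos hj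
    have hj1 : (fracPart j : ℝ) < 1 := mod_cast fracPart_lt_one j
    have hcoe : (j.val / N : ℝ) = fracPart j := by rw [fracPart]; push_cast; rfl
    rw [ZMod.toAddCircle_apply, hcoe, sinZeta_one hj0 hj1, bernoulliDist,
      sawtooth_of_ne_zero (fracPart_pos hj).ne']
    push_cast
    ring

open scoped ZMod in
theorem LFunction_dft_one_of_odd {Φ : ZMod N → ℂ} (hΦ : Φ.Odd) :
    ZMod.LFunction (𝓕 Φ) 1 = Real.pi * I * ∑ j, Φ j * bernoulliDist j := by
  have hL : ZMod.LFunction (𝓕 Φ) 1 = ∑ j, Φ j * expZeta (-ZMod.toAddCircle j) 1 := by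
    simp only [ZMod.LFunction_dft Φ (.inl hΦ.map_zero), map_neg]
  have hL_neg : ZMod.LFunction (𝓕 Φ) 1 = -∑ j, Φ j * expZeta (ZMod.toAddCircle j) 1 := by
    rw [hL, ← sum_neg_distrib]
    exact Fintype.sum_equiv (.neg _) _ _ fun j ↦ by simp [hΦ j]
  have hsin : ∑ j, Φ j * sinZeta (ZMod.toAddCircle j) 1 = I * ZMod.LFunction (𝓕 Φ) 1 := by
    simp only [sinZeta_eq, ← mul_div_assoc, mul_sub, ← sum_div, sum_sub_distrib]
    rw [← hL, ← neg_eq_iff_eq_neg.mpr hL_neg]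
    field_simp
    rw [I_sq]
    ring
  have hsaw : ∑ j, Φ j * sinZeta (ZMod.toAddCircle j) 1 =
      -Real.pi * ∑ j, Φ j * bernoulliDist j := by
    rw [mul_sum]
    exact sum_congr rfl fun j _ ↦ by rw [sinZeta_toAddCircle_one]; ring
  linear_combination I * hsin - I * hsaw + ZMod.LFunction (𝓕 Φ) 1 * I_sq

end SinZeta

/-! ### Eigenspaces of distributions -/

section Eigenfunctions

variable {N : ℕ} [NeZero N] {R : Type*} [CommRing R]

theorem unit_mul_natCast_eq_iff {d n : ℕ} (h : d * n = N) (u : (ZMod N)ˣ) :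
    (u : ZMod N) * d = d ↔ ZMod.unitsMap (Dvd.intro_left d h) u = 1 := by
  subst h
  have hd : (u : ZMod (d * n)) * d = d ↔ (d : ZMod (d * n)) * u = d * 1 := by
    simp only [mul_comm, mul_one]
  rw [hd, natCast_mul_eq_natCast_mul_iff, ← ZMod.natCast_eq_natCast_iff, ← Units.val_inj,
    ZMod.unitsMap_val, ZMod.natCast_val, ZMod.natCast_val, ZMod.cast_one (Dvd.intro_left d rfl),
    Units.val_one]

theorem forall_apply_eq_one_iff_conductor_dvd {d n : ℕ} (h : d * n = N)
    (χ : DirichletCharacter R N) :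
    (∀ u : (ZMod N)ˣ, (u : ZMod N) * d = d → χ u = 1) ↔ χ.conductor ∣ n := by
  have hn : n ∣ N := Dvd.intro_left d h
  rw [← DirichletCharacter.mem_conductorSet_iff_conductor_dvd χ hn,
    DirichletCharacter.mem_conductorSet_iff, DirichletCharacter.factorsThrough_iff_ker_unitsMap hn]
  refine forall_congr' fun u ↦ ?_
  rw [unit_mul_natCast_eq_iff h, MonoidHom.mem_ker, MonoidHom.mem_ker,
    ← Units.val_inj (a := χ.toUnitHom u), MulChar.coe_toUnitHom, Units.val_one]

theorem natCast_dvd_of_natCast_mul_eq_zero {d n : ℕ} (h : d * n = N) {x : ZMod N}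
    (hx : (d : ZMod N) * x = 0) : (n : ZMod N) ∣ x := by
  subst h
  rw [← mul_zero (d : ZMod (d * n)), natCast_mul_eq_natCast_mul_iff, ZMod.val_zero,
    Nat.modEq_zero_iff_dvd] at hx
  simpa using Nat.cast_dvd_cast (α := ZMod (d * n)) hx

omit [NeZero N] in
theorem dvd_of_natCast_dvd_unit_mul_natCast {d d' : ℕ} (hd : d ∣ N) {u : ZMod N}
    (hu : IsUnit u) (h : (d : ZMod N) ∣ u * d') : d ∣ d' := by
  have hcast := map_dvd (ZMod.castHom hd (ZMod d)) (hu.dvd_mul_left.mp h)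
  rwa [map_natCast, map_natCast, ZMod.natCast_self, zero_dvd_iff, ZMod.natCast_eq_zero_iff] at hcast

theorem eq_zero_of_sum_eq_zero [IsDomain R] [CharZero R] {α : Type*} {s : Finset α} {f : α → R}
    {x : α} (hx : x ∈ s) (hf : ∀ y ∈ s, f y = 0 ∨ f y = f x) (hsum : ∑ y ∈ s, f y = 0) :
    f x = 0 := by
  classical
  have hcard : ∑ y ∈ s, f y = #{y ∈ s | f y = f x} * f x := by
    by_cases h : f x = 0
    · rw [hsum, h, mul_zero]
    rw [← nsmul_eq_mul, ← sum_const, sum_filter]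
    refine sum_congr rfl fun y hy ↦ ?_
    split_ifs with hxy
    · exact hxy
    · exact (hf y hy).resolve_right hxy
  rw [hcard, mul_eq_zero, Nat.cast_eq_zero, card_eq_zero] at hsum
  exact hsum.resolve_left (ne_empty_of_mem (mem_filter.mpr ⟨hx, rfl⟩))

/-- Functions on `ℤ/Nℤ` on which the action of `(ℤ/Nℤ)ˣ` by dilations is through `χ`. -/
def IsEigenfunction (χ : DirichletCharacter R N) (f : ZMod N → R) : Prop :=
  ∀ (u : (ZMod N)ˣ) (a : ZMod N), f (u * a) = χ u * f a

namespace IsEigenfunction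

variable [IsDomain R] {χ : DirichletCharacter R N} {f : ZMod N → R}

theorem apply_natCast_eq_zero (hf : IsEigenfunction χ f) {d n : ℕ} (h : d * n = N)
    (hχ : ¬ χ.conductor ∣ n) : f d = 0 := by
  rw [← forall_apply_eq_one_iff_conductor_dvd h] at hχ
  push Not at hχ
  obtain ⟨u, hu, hχu⟩ := hχ
  have hfix : χ u * f d = f d := by rw [← hf u d, hu]
  exact (mul_left_eq_self₀.mp hfix).resolve_left hχu

omit [IsDomain R] in
theorem eq_zero_or_eq_of_mem_fibre (hf : IsEigenfunction χ f) {d e : ℕ}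
    (h : e * d * χ.conductor = N) (hlt : ∀ d', d ∣ d' → d' ∣ N → d' ≠ d → f d' = 0) {y : ZMod N}
    (hy : (e : ZMod N) * y = e * d) : f y = 0 ∨ f y = f d := by
  have hdN : d ∣ N := ⟨e * χ.conductor, h.symm.trans (by ring)⟩
  have hdy : (d : ZMod N) ∣ y := by
    have hsub : (e : ZMod N) * (y - d) = 0 := by rw [mul_sub, hy, sub_self]
    have hdvd := natCast_dvd_of_natCast_mul_eq_zero ((mul_assoc _ _ _).symm.trans h) hsub
    rw [Nat.cast_mul] at hdvd
    exact (dvd_sub_self_right).mp ((dvd_mul_right _ _).trans hdvd)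
  obtain ⟨d', hd'N, _, ⟨u, rfl⟩, rfl⟩ := y.eq_unit_mul_divisor
  rw [hf]
  obtain rfl | hne := eq_or_ne d' d
  · have hu : (u : ZMod N) * (e * d' : ℕ) = (e * d' : ℕ) := by
      rw [Nat.cast_mul, mul_left_comm, hy]
    rw [(forall_apply_eq_one_iff_conductor_dvd h χ).mpr dvd_rfl u hu, one_mul]
    exact .inr rfl
  · rw [hlt d' (dvd_of_natCast_dvd_unit_mul_natCast hdN u.isUnit hdy) hd'N hne, mul_zero]
    exact .inl rfl

theorem eq_zero_of_isDistribution [CharZero R] (hf : IsEigenfunction χ f)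
    (hdist : IsDistribution f) {c : ℕ} (hc : c * χ.conductor = N) (h0 : f c = 0) (a : ZMod N) :
    f a = 0 := by
  suffices hdiv : ∀ n d : ℕ, d * n = N → f d = 0 by
    obtain ⟨d, ⟨n, hn⟩, _, ⟨u, rfl⟩, rfl⟩ := a.eq_unit_mul_divisor
    rw [hf, hdiv n d hn.symm, mul_zero]
  intro n
  induction n using Nat.strong_induction_on with
  | _ n ih =>
  intro d h
  by_cases hχ : χ.conductor ∣ n
  · obtain ⟨e, rfl⟩ := hχ
    have hN : e * d * χ.conductor = N := .trans (by ring) h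
    have hed : e * d = c := Nat.eq_of_mul_eq_mul_right (Nat.pos_of_ne_zero χ.conductor_ne_zero)
      (hN.trans hc.symm)
    have hsum : ∑ y : ZMod N with (e : ZMod N) * y = e * d, f y = 0 := by
      rw [hdist e ⟨d * χ.conductor, hN.symm.trans (mul_assoc _ _ _)⟩, ← Nat.cast_mul, hed, h0]
    refine eq_zero_of_sum_eq_zero (x := (d : ZMod N)) (by simp) (fun y hy ↦ ?_) hsum
    refine hf.eq_zero_or_eq_of_mem_fibre hN ?_ (mem_filter_univ y |>.mp hy)
    rintro d' hdd' ⟨m, rfl⟩ hne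
    refine ih m ?_ d' rfl
    have hd' : 0 < d' := Nat.pos_of_mul_pos_right (NeZero.pos (d' * m))
    have hlt : d < d' := (Nat.le_of_dvd hd' hdd').lt_of_ne' hne
    have hm : 0 < m := Nat.pos_of_mul_pos_left (NeZero.pos (d' * m))
    exact Nat.lt_of_mul_lt_mul_left ((Nat.mul_lt_mul_of_pos_right hlt hm).trans_eq h.symm)
  · exact hf.apply_natCast_eq_zero h hχ

end IsEigenfunction

end Eigenfunctions

/-! ### Odd distributions -/

section Kubert

variable {N : ℕ} [NeZero N]

section CharComponent

variable {R : Type*} [CommRing R]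

/-- `φ(N)` times the projection of `f` to the `χ`-eigenspace of the dilations by `(ℤ/Nℤ)ˣ`. -/
def charComponent (χ : DirichletCharacter R N) (f : ZMod N → R) (a : ZMod N) : R :=
  ∑ u : (ZMod N)ˣ, χ ((u⁻¹ : (ZMod N)ˣ) : ZMod N) * f (u * a)

theorem isEigenfunction_charComponent (χ : DirichletCharacter R N) (f : ZMod N → R) :
    IsEigenfunction χ (charComponent χ f) := fun v a ↦ by
  simp only [charComponent, mul_sum]
  refine Fintype.sum_equiv (Equiv.mulRight v) _ _ fun u ↦ ?_
  rw [Equiv.coe_mulRight, ← mul_assoc (χ v), ← map_mul, ← Units.val_mul, mul_inv_rev,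
    mul_inv_cancel_left, Units.val_mul, mul_assoc (u : ZMod N)]

theorem IsDistribution.charComponent {f : ZMod N → R} (hf : IsDistribution f)
    (χ : DirichletCharacter R N) : IsDistribution (charComponent χ f) :=
  .sum fun u _ ↦ (hf.comp_unit_mul u).map (AddMonoidHom.mulLeft _)

theorem charComponent_neg {f : ZMod N → R} (hf : Function.Odd f) (χ : DirichletCharacter R N)
    (a : ZMod N) : charComponent χ f (-a) = -charComponent χ f a := by
  simp only [charComponent, mul_neg, hf _, sum_neg_distrib]

theorem charComponent_eq_zero_of_even [NoZeroDivisors R] [CharZero R] {χ : DirichletCharacter R N}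
    (hχ : χ.Even) {f : ZMod N → R} (hf : Function.Odd f) (a : ZMod N) :
    charComponent χ f a = 0 := by
  have h := isEigenfunction_charComponent χ f (-1) a
  rw [Units.val_neg, Units.val_one, neg_one_mul, charComponent_neg hf, hχ, one_mul] at h
  exact self_eq_neg.mp h.symm

end CharComponent

theorem sum_charComponent (f : ZMod N → ℂ) (a : ZMod N) :
    ∑ χ : DirichletCharacter ℂ N, charComponent χ f a = N.totient * f a := by
  simp only [charComponent]
  rw [sum_comm]
  simp only [← sum_mul, DirichletCharacter.sum_characters_eq, Units.val_eq_one, inv_eq_one,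
    ite_mul, zero_mul, sum_ite_eq', mem_univ, if_true, Units.val_one, one_mul]

theorem totient_mul_sum_mul_eq {R : Type*} [CommRing R] {χ : DirichletCharacter R N}
    {Φ : ZMod N → R}
    (hΦ : ∀ (u : (ZMod N)ˣ) a, Φ (u * a) = χ ((u⁻¹ : (ZMod N)ˣ) : ZMod N) * Φ a) (f : ZMod N → R) :
    N.totient * ∑ a, Φ a * f a = ∑ a, Φ a * charComponent χ f a := by
  have hinv (u : (ZMod N)ˣ) : ∑ a, Φ (u * a) * f (u * a) = ∑ a, Φ a * f a :=
    Fintype.sum_equiv u.mulLeft _ _ fun a ↦ rfl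
  calc N.totient * ∑ a, Φ a * f a
    _ = ∑ u : (ZMod N)ˣ, ∑ a, Φ (u * a) * f (u * a) := by
      simp only [hinv, sum_const, card_univ, ZMod.card_units_eq_totient, nsmul_eq_mul]
    _ = ∑ a, Φ a * charComponent χ f a := by
      rw [sum_comm]
      simp only [charComponent, mul_sum, hΦ, mul_left_comm, mul_assoc]

open scoped ZMod in
theorem dft_symm_unit_mul (χ : DirichletCharacter ℂ N) (u : (ZMod N)ˣ) (a : ZMod N) :
    𝓕⁻ χ (u * a) = χ ((u⁻¹ : (ZMod N)ˣ) : ZMod N) * 𝓕⁻ χ a := by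
  have h : (fun a ↦ 𝓕⁻ χ ((u : ZMod N) * a)) =
      fun a ↦ χ ((u⁻¹ : (ZMod N)ˣ) : ZMod N) * 𝓕⁻ χ a := by
    apply ZMod.dft.injective
    ext k
    rw [ZMod.dft_comp_unitMul, ZMod.dft_const_mul, LinearEquiv.apply_symm_apply, map_mul]
  exact congrFun h a

open scoped ZMod in
theorem sum_dft_symm_mul_bernoulliDist_ne_zero {χ : DirichletCharacter ℂ N} (hχ : χ.Odd) :
    ∑ a, 𝓕⁻ χ a * bernoulliDist a ≠ 0 := by
  have hodd : Function.Odd (𝓕⁻ χ) := by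
    rw [← ZMod.dft_odd_iff, LinearEquiv.apply_symm_apply]
    exact hχ.to_fun
  have hne : χ ≠ 1 := by
    rintro rfl
    have heven : (1 : DirichletCharacter ℂ N).Even := MulChar.one_apply_coe (-1)
    exact DirichletCharacter.Even.not_odd _ heven hχ
  have hL : DirichletCharacter.LFunction χ 1 =
      Real.pi * Complex.I * ∑ a, 𝓕⁻ χ a * bernoulliDist a := by
    rw [← LFunction_dft_one_of_odd hodd, LinearEquiv.apply_symm_apply, DirichletCharacter.LFunction]
  exact right_ne_zero_of_mul (hL ▸ DirichletCharacter.LFunction_apply_one_ne_zero hne)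

theorem charComponent_bernoulliDist_ne_zero {χ : DirichletCharacter ℂ N} (hχ : χ.Odd) {c : ℕ}
    (hc : c * χ.conductor = N) : charComponent χ bernoulliDist c ≠ 0 := fun h0 ↦ by
  have hzero := (isEigenfunction_charComponent χ bernoulliDist).eq_zero_of_isDistribution
    (isDistribution_bernoulliDist.charComponent χ) hc h0
  have h := totient_mul_sum_mul_eq (dft_symm_unit_mul χ) bernoulliDist
  simp only [hzero, mul_zero, sum_const_zero, mul_eq_zero, Nat.cast_eq_zero,
    Nat.totient_eq_zero, NeZero.ne N, false_or] at h
  exact sum_dft_symm_mul_bernoulliDist_ne_zero hχ h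

theorem exists_charComponent_eq_mul {f : ZMod N → ℂ} (hf : IsDistribution f)
    (hodd : Function.Odd f) (χ : DirichletCharacter ℂ N) :
    ∃ t : ℂ, ∀ a, charComponent χ f a = t * charComponent χ bernoulliDist a := by
  obtain hχ | hχ := χ.even_or_odd
  · exact ⟨0, fun a ↦ by rw [charComponent_eq_zero_of_even hχ hodd, zero_mul]⟩
  obtain ⟨c, hc⟩ := χ.conductor_dvd_level
  rw [mul_comm] at hc
  have hne := charComponent_bernoulliDist_ne_zero hχ hc.symm
  set t := charComponent χ f c / charComponent χ bernoulliDist c with ht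
  refine ⟨t, fun a ↦ sub_eq_zero.mp ?_⟩
  refine IsEigenfunction.eq_zero_of_isDistribution (χ := χ)
    (f := fun a ↦ charComponent χ f a - t * charComponent χ bernoulliDist a)
    (fun u a ↦ ?_) ((hf.charComponent χ).sub
      ((isDistribution_bernoulliDist.charComponent χ).map (AddMonoidHom.mulLeft t))) hc.symm ?_ a
  · simp only [isEigenfunction_charComponent χ _ u a]
    ring
  · simp only [ht, div_mul_cancel₀ _ hne, sub_self]

theorem exists_eq_sum_mul_bernoulliDist {f : ZMod N → ℂ} (hf : IsDistribution f)
    (hodd : Function.Odd f) :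
    ∃ w : (ZMod N)ˣ → ℂ, ∀ a, f a = ∑ u : (ZMod N)ˣ, w u * bernoulliDist ((u : ZMod N) * a) := by
  choose t ht using exists_charComponent_eq_mul hf hodd
  have hφ : (N.totient : ℂ) ≠ 0 := by simp [NeZero.ne N]
  refine ⟨fun u ↦ (N.totient : ℂ)⁻¹ * ∑ χ, t χ * χ ((u⁻¹ : (ZMod N)ˣ) : ZMod N), fun a ↦ ?_⟩
  calc f a = (N.totient : ℂ)⁻¹ * ∑ χ, t χ * charComponent χ bernoulliDist a := by
        simp only [← ht, sum_charComponent, inv_mul_cancel_left₀ hφ]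
    _ = _ := by
        simp only [charComponent, mul_sum, sum_mul, mul_assoc]
        rw [sum_comm]

theorem sum_zsmul_eq_zero_of_bernoulliDist {V : Type*} [AddCommGroup V] [Module ℚ V]
    {f : ZMod N → V} (hf : IsDistribution f) (hodd : Function.Odd f) {ι : Type*} {s : Finset ι}
    {n : ι → ℤ} {a : ι → ZMod N}
    (h : ∀ u : (ZMod N)ˣ, ∑ i ∈ s, n i * bernoulliDist ((u : ZMod N) * a i) = 0) :
    ∑ i ∈ s, n i • f (a i) = 0 := by
  rw [← Module.forall_dual_apply_eq_zero_iff ℚ]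
  intro φ
  let g : V →+ ℂ := (Rat.castHom ℂ).toAddMonoidHom.comp φ.toAddMonoidHom
  obtain ⟨w, hw⟩ := exists_eq_sum_mul_bernoulliDist (hf.map g) fun a ↦ by rw [hodd, map_neg]
  have hg : g (∑ i ∈ s, n i • f (a i)) = 0 := by
    simp only [map_sum, map_zsmul, hw, smul_sum, zsmul_eq_mul]
    rw [sum_comm]
    simp only [mul_left_comm _ (w _), ← mul_sum, h, mul_zero, sum_const_zero]
  exact Rat.cast_eq_zero.mp hg

end Kubert

/-! ### The Koblitz–Ogus criterion -/

section Criterion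

variable {N : ℕ} [NeZero N]

/-- The class of `log (Γ / √π)` modulo logarithms of algebraic numbers, as a function on
`ℤ/Nℤ`. -/
noncomputable def logGammaDist (a : ZMod N) : ℝ ⧸ algebraicLog :=
  algebraicLog.mkQ (normLogGamma (fracPart a))

theorem isDistribution_logGammaDist : IsDistribution (logGammaDist (N := N)) := by
  refine isDistribution_comp_fracPart (ψ := fun x ↦ algebraicLog.mkQ (normLogGamma x))
    fun d hd y hy _ ↦ ?_
  have : NeZero d := ⟨hd⟩
  rw [← map_sum, ← sub_eq_zero, ← map_sub]
  exact (Submodule.Quotient.mk_eq_zero _).mpr (sum_range_normLogGamma_sub_mem d hy)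

theorem odd_logGammaDist : Function.Odd (logGammaDist (N := N)) := by
  refine odd_comp_fracPart (ψ := fun x ↦ algebraicLog.mkQ (normLogGamma x)) ?_ fun x h0 h1 ↦ ?_
  · rw [normLogGamma_zero, map_zero]
  · rw [eq_neg_iff_add_eq_zero, add_comm, ← map_add]
    exact (Submodule.Quotient.mk_eq_zero _).mpr (normLogGamma_add_one_sub_mem h0 h1)

theorem sum_zsmul_normLogGamma_mem {ι : Type*} {s : Finset ι} {n : ι → ℤ} {a : ι → ZMod N}
    (h : ∀ u : (ZMod N)ˣ, ∑ i ∈ s, n i * bernoulliDist ((u : ZMod N) * a i) = 0) :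
    ∑ i ∈ s, n i • normLogGamma (fracPart (a i)) ∈ algebraicLog := by
  have hsum := sum_zsmul_eq_zero_of_bernoulliDist isDistribution_logGammaDist odd_logGammaDist h
  simp only [logGammaDist, ← map_zsmul, ← map_sum] at hsum
  exact (Submodule.Quotient.mk_eq_zero _).mp hsum

theorem exp_sum_zsmul_normLogGamma {ι : Type*} {s : Finset ι} (n : ι → ℤ) {x : ι → ℚ}
    (hx : ∀ i ∈ s, 0 < x i) :
    Real.exp (∑ i ∈ s, n i • normLogGamma (x i)) =
      (∏ i ∈ s, Real.Gamma (x i) ^ n i) / Real.pi ^ ((∑ i ∈ s, n i : ℤ) / 2 : ℝ) := by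
  have hpi : Real.pi ^ ((∑ i ∈ s, n i : ℤ) / 2 : ℝ) = ∏ i ∈ s, √Real.pi ^ n i := by
    rw [Int.cast_sum, sum_div, Real.rpow_sum_of_pos Real.pi_pos]
    refine prod_congr rfl fun i _ ↦ ?_
    rw [Real.sqrt_eq_rpow, ← Real.rpow_mul_intCast Real.pi_pos.le, one_div_mul_eq_div]
  rw [hpi, ← prod_div_distrib, Real.exp_sum]
  refine prod_congr rfl fun i hi ↦ ?_
  rw [zsmul_eq_mul, mul_comm, Real.exp_mul, Real.rpow_intCast, exp_normLogGamma (hx i hi), div_zpow]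

theorem sum_eq_two_mul_of_sum_mul_fract_eq {ι : Type*} {s : Finset ι} {n : ι → ℤ} {r : ι → ℚ}
    {k : ℚ} (hint : ∀ i ∈ s, ∀ m : ℤ, r i ≠ m) (hpos : ∑ i ∈ s, n i * Int.fract (r i) = k)
    (hneg : ∑ i ∈ s, n i * Int.fract (-r i) = k) : ∑ i ∈ s, (n i : ℚ) = 2 * k := by
  calc ∑ i ∈ s, (n i : ℚ) = ∑ i ∈ s, (n i * Int.fract (r i) + n i * Int.fract (-r i)) := by
        refine sum_congr rfl fun i hi ↦ ?_
        have hfract : Int.fract (r i) ≠ 0 := fun h0 ↦ by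
          obtain ⟨m, hm⟩ := Int.fract_eq_zero_iff.mp h0
          exact hint i hi m hm.symm
        rw [Int.fract_neg hfract]
        ring
    _ = 2 * k := by rw [sum_add_distrib, hpos, hneg, two_mul]

theorem sum_mul_bernoulliDist_eq {ι : Type*} {s : Finset ι} (n : ι → ℤ) {a : ι → ZMod N}
    (ha : ∀ i ∈ s, a i ≠ 0) :
    ∑ i ∈ s, n i * bernoulliDist (a i) =
      ((∑ i ∈ s, n i * fracPart (a i) - (∑ i ∈ s, (n i : ℚ)) / 2 : ℚ) : ℂ) := by
  rw [sum_div, ← sum_sub_distrib, Rat.cast_sum]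
  refine sum_congr rfl fun i hi ↦ ?_
  rw [bernoulliDist, sawtooth_of_ne_zero (mt fracPart_eq_zero.mp (ha i hi))]
  push_cast
  ring

theorem intCast_ne_zero_of_div_ne {m : ℤ} (h : ∀ k : ℤ, (m / N : ℚ) ≠ k) : (m : ZMod N) ≠ 0 := by
  rw [Ne, ZMod.intCast_zmod_eq_zero_iff_dvd]
  rintro ⟨k, rfl⟩
  refine h k ?_
  rw [Int.cast_mul, Int.cast_natCast, mul_div_cancel_left₀ _ (NeZero.ne (N : ℚ))]

theorem fracPart_unit_mul_intCast (u : (ZMod N)ˣ) (m : ℤ) :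
    fracPart ((u : ZMod N) * (m : ZMod N)) = Int.fract ((u : ZMod N).val * (m / N : ℚ)) := by
  rw [← mul_div_assoc, ← Int.cast_natCast, ← Int.cast_mul, ← fracPart_intCast, Int.cast_mul,
    Int.cast_natCast, ZMod.natCast_zmod_val]

end Criterion

end KoblitzOgus

open KoblitzOgus in
theorem stmt14_general {ι : Type*} [Fintype ι] (N : ℕ) [NeZero N] (r : ι → ℚ) (n : ι → ℤ) (k : ℚ)
    (hden : ∀ i, ∃ m : ℤ, r i = m / N) (hint : ∀ i, ∀ m : ℤ, r i ≠ m)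
    (h : ∀ s : ℤ, Int.gcd s N = 1 → ∑ i, n i * Int.fract (s * r i) = k) :
    IsAlgebraic ℚ ((∏ i, Real.Gamma (Int.fract (r i) : ℚ) ^ n i) / Real.pi ^ (k : ℝ)) := by
  choose m hm using hden
  obtain rfl : r = fun i ↦ (m i / N : ℚ) := funext hm
  beta_reduce at hint h ⊢
  have hne : ∀ i, (m i : ZMod N) ≠ 0 := fun i ↦ intCast_ne_zero_of_div_ne (hint i)
  have hn : ∑ i, (n i : ℚ) = 2 * k :=
    sum_eq_two_mul_of_sum_mul_fract_eq (fun i _ ↦ hint i) (by simpa using h 1 (by simp))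
      (by simpa using h (-1) (by simp))
  have hbernoulli (u : (ZMod N)ˣ) :
      ∑ i, n i * bernoulliDist ((u : ZMod N) * (m i : ZMod N)) = 0 := by
    rw [sum_mul_bernoulliDist_eq n fun i _ ↦ u.isUnit.mul_right_eq_zero.not.mpr (hne i), hn]
    have hu := h (u : ZMod N).val (ZMod.val_coe_unit_coprime u)
    simp only [Int.cast_natCast, ← fracPart_unit_mul_intCast] at hu
    rw [hu, mul_div_cancel_left₀ _ two_ne_zero, sub_self, Rat.cast_zero]
  have halg := mem_algebraicLog.mp (sum_zsmul_normLogGamma_mem hbernoulli)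
  have hk : ((∑ i, n i : ℤ) / 2 : ℝ) = k := by
    rw [div_eq_iff two_ne_zero, mul_comm]
    exact_mod_cast hn
  rw [exp_sum_zsmul_normLogGamma n fun i _ ↦ fracPart_pos (hne i), hk] at halg
  simpa only [fracPart_intCast] using halg

theorem stmt14 (N : ℕ) (hN : 1 ≤ N) (r : Fin 4 → ℚ)
    (hden : ∀ i, ∃ m : ℤ, r i = m / N)
    (hsum : ∃ m : ℤ, r 0 + r 1 + r 2 + r 3 = m)
    (hint : ∀ i, ∀ n : ℤ, r i ≠ n)
    (h : ∀ s : ℤ, Int.gcd s N = 1 →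
      Int.fract (s * r 0) + Int.fract (s * r 1) + Int.fract (s * r 2)
        + Int.fract (s * r 3) = 2) :
    IsAlgebraic ℚ
      ((Real.Gamma (Int.fract (r 0) : ℚ) * Real.Gamma (Int.fract (r 1) : ℚ)
        * Real.Gamma (Int.fract (r 2) : ℚ) * Real.Gamma (Int.fract (r 3) : ℚ))
          / Real.pi ^ 2) := by
  have : NeZero N := ⟨Nat.one_le_iff_ne_zero.mp hN⟩
  simpa [Fin.prod_univ_four] using
    stmt14_general N r 1 2 hden hint (by simpa [Fin.sum_univ_four] using h)
end
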